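/- arXiv:1808.06513 — 2 statements merged into one kernel-verified Lean document; each statement's English description precedes it below -/
import Mathlib

section
/- Let E ⊆ ℝ⁴ = ℍ×ℝ be precisely monotone with E ≠ ∅ and E ≠ ℝ⁴. Then the topological boundary ∂E is an affine hyperplane: there exist a nonzero ν ∈ ℝ⁴ and c ∈ ℝ with ∂E = {v ∈ ℝ⁴ : ⟨v,ν⟩ = c}. -/
/- The group `ℍ×ℝ`: `ℝ⁴` with coordinates `(x,y,u,t)` and law
`(x,y,u,t)·(x',y',u',t') = (x+x', y+y', u+u', t+t'+2(yx'−y'x))`. -/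

noncomputable section

/-- Group law of `ℍ×ℝ` on `ℝ⁴`. -/
def hmul (p q : Fin 4 → ℝ) : Fin 4 → ℝ :=
  ![p 0 + q 0, p 1 + q 1, p 2 + q 2, p 3 + q 3 + 2 * (p 1 * q 0 - q 1 * p 0)]

/-- Horizontal convexity in `ℍ×ℝ`. -/
def HRConvex (C : Set (Fin 4 → ℝ)) : Prop :=
  ∀ p ∈ C, ∀ a b c : ℝ, hmul p ![a, b, c, 0] ∈ C →
    ∀ s : ℝ, 0 ≤ s → s ≤ 1 → hmul p ![s * a, s * b, s * c, 0] ∈ C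

/-- Precise monotonicity in `ℍ×ℝ`. -/
def PreciselyMonotone (E : Set (Fin 4 → ℝ)) : Prop := HRConvex E ∧ HRConvex Eᶜ

/-!
Write `ℍ×ℝ` as the cylinder over the Heisenberg group `ℍ`.

A monotone subset of `ℍ` is contained in the closure of its interior. By self-similarity it is
enough to find an interior point within bounded distance of a given point of the set, and some
horizontal segments starting at that point bound a piece of the ruled surface `2 x = y t` inside
the set; the horizontal segments through the surface that end in the set then fill an open set. The
property passes to the cylinder. Consequently the frontier `Z` of a monotone set contains the whole
line through any two aligned points of `Z`. Moreover any two horizontal directions at a point of `Z`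
span a plane that meets `Z` in a further point, since a punctured plane is connected.

If `Z` is invariant along the factor `ℝ`, it projects to a proper subset of `ℍ` that is closed under
horizontal lines and has such a line through each of its points. Two skew or parallel lines in
general position would generate all of `ℍ`, so these lines lie in a common plane. Otherwise some
fibre of `Z` over `ℍ` is a single point. This property propagates along horizontal lines, so `Z` is
the graph of a function that is affine on horizontal lines, and such a function is affine.
-/

open Set Filter Topology
open AffineMap (lineMap)

section Preliminaries

variable {V : Type*} [AddCommGroup V] [Module ℝ V]

theorem mem_segment_lineMap (p q : V) {a : ℝ} (ha : 1 ≤ a) : q ∈ segment ℝ p (lineMap p q a) := by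
  rw [segment_eq_image_lineMap]
  refine ⟨a⁻¹, ⟨by positivity, inv_le_one_of_one_le₀ ha⟩, ?_⟩
  rw [AffineMap.lineMap_lineMap_right, inv_mul_cancel₀ (by positivity), AffineMap.lineMap_apply_one]

theorem subset_interior_or_subset_interior_compl {X : Type*} [TopologicalSpace X] {s t : Set X}
    (ht : IsPreconnected t) (h : Disjoint t (frontier s)) :
    t ⊆ interior s ∨ t ⊆ interior sᶜ := by
  rw [← subset_compl_iff_disjoint_right, compl_frontier_eq_union_interior] at h
  exact ht.subset_or_subset isOpen_interior isOpen_interior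
    (disjoint_compl_right.mono interior_subset interior_subset) h

theorem frontier_eq_of_subset_hyperplane [TopologicalSpace V]
    [IsTopologicalAddGroup V] [ContinuousSMul ℝ V] {E : Set V} {f : V →L[ℝ] ℝ} (hf : f ≠ 0)
    {c : ℝ} (h : frontier E ⊆ {p | f p = c}) (hE : (interior E).Nonempty)
    (hE' : (interior Eᶜ).Nonempty) : frontier E = {p | f p = c} := by
  refine h.antisymm fun z hz => ?_
  by_contra hzE
  have hdense : Dense {p | f p ≠ c} := (dense_compl_singleton c).preimage
    (f.isOpenMap_of_ne_zero hf)
  have hstar : StarConvex ℝ z (insert z {p | f p ≠ c}) := by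
    rintro p hp a b - - hab
    by_cases hbp : b = 0 ∨ p = z
    · left
      rcases hbp with rfl | rfl
      · rw [add_zero] at hab
        simp [hab]
      · rw [← add_smul, hab, one_smul]
    · push Not at hbp
      right
      have hp' : f p - c ≠ 0 := sub_ne_zero.2 (hp.resolve_left hbp.2)
      have hfp : f (a • z + b • p) - c = b * (f p - c) := by
        simp only [map_add, map_smul, smul_eq_mul, show f z = c from hz]
        linear_combination c * hab
      exact sub_ne_zero.1 (hfp ▸ mul_ne_zero hbp.1 hp')
  have hdisj : Disjoint (insert z {p | f p ≠ c}) (frontier E) := by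
    rw [disjoint_left]
    rintro p (rfl | hp) hpE
    exacts [hzE hpE, hp (h hpE)]
  have hconn := (hstar.isPathConnected (mem_insert _ _)).isConnected.isPreconnected
  obtain ⟨p, hp, hpE⟩ := hdense.inter_open_nonempty _ isOpen_interior hE
  obtain ⟨q, hq, hqE⟩ := hdense.inter_open_nonempty _ isOpen_interior hE'
  rcases subset_interior_or_subset_interior_compl hconn hdisj with h | h
  · exact interior_subset hq (interior_subset (h (.inr hqE)))
  · exact interior_subset (h (.inr hpE)) (interior_subset hp)

theorem exists_ne_mul_sq_add_mul_eq {a : ℝ} (ha : a ≠ 0) (b : ℝ) :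
    ∃ s t : ℝ, s ≠ t ∧ a * s ^ 2 + b * s = a ∧ a * t ^ 2 + b * t = a := by
  set d := √(b ^ 2 + 4 * a ^ 2)
  have hd : d ^ 2 = b ^ 2 + 4 * a ^ 2 := Real.sq_sqrt (by positivity)
  have hd0 : 0 < d := Real.sqrt_pos.2 (by positivity)
  refine ⟨(-b + d) / (2 * a), (-b - d) / (2 * a), fun h => ?_, ?_, ?_⟩
  · rw [div_left_inj' (by simpa using ha)] at h
    linarith
  · field_simp
    linear_combination hd
  · field_simp
    linear_combination hd

end Preliminaries

/-- The left-invariant one-form on a step-two group that defines its horizontal distribution, when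
all commutators lie on a single central line, written on the Lie algebra `V`: at the point `p` it is
the functional `v ↦ height v - bracket p v`, and `reeb` spans the central line. Degenerate brackets
are allowed, so that `ℍ×ℝ` is covered along with `ℍ`. -/
structure ContactForm (V : Type*) [NormedAddCommGroup V] [NormedSpace ℝ V] where
  height : V →L[ℝ] ℝ
  bracket : V →L[ℝ] V →L[ℝ] ℝ
  reeb : V
  bracket_self : ∀ v, bracket v v = 0
  height_reeb : height reeb = 1
  bracket_reeb : bracket reeb = 0

namespace ContactForm

variable {V V' : Type*} [NormedAddCommGroup V] [NormedSpace ℝ V]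
  [NormedAddCommGroup V'] [NormedSpace ℝ V'] {K : ContactForm V} {K' : ContactForm V'}

section Alignment

theorem bracket_swap (K : ContactForm V) (v w : V) : K.bracket v w = -K.bracket w v := by
  have h := K.bracket_self (v + w)
  simp only [map_add, add_apply, K.bracket_self] at h
  linear_combination h

theorem bracket_reeb_left (K : ContactForm V) (v : V) : K.bracket K.reeb v = 0 := by
  simp [K.bracket_reeb]

theorem bracket_reeb_right (K : ContactForm V) (v : V) : K.bracket v K.reeb = 0 := by
  rw [K.bracket_swap, bracket_reeb_left, neg_zero]

/-- `v` lies in the kernel of the contact form at `p`, i.e. `p + ℝ v` is a horizontal line. -/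
def Horizontal (K : ContactForm V) (p v : V) : Prop := K.height v = K.bracket p v

/-- `p` and `q` lie on a common horizontal line. -/
def Aligned (K : ContactForm V) (p q : V) : Prop := K.Horizontal p (q - p)

theorem aligned_iff {p q : V} : K.Aligned p q ↔ K.height q - K.height p = K.bracket p q := by
  simp [Aligned, Horizontal, map_sub, K.bracket_self]

theorem Horizontal.smul {p v : V} (h : K.Horizontal p v) (a : ℝ) : K.Horizontal p (a • v) := by
  simp only [Horizontal, map_smul, smul_eq_mul] at *
  rw [h]

theorem Horizontal.add {p v w : V} (hv : K.Horizontal p v) (hw : K.Horizontal p w) :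
    K.Horizontal p (v + w) := by
  simp only [Horizontal, map_add] at *
  rw [hv, hw]

theorem Horizontal.aligned_add {p v : V} (h : K.Horizontal p v) : K.Aligned p (p + v) := by
  simpa [Aligned] using h

theorem Aligned.lineMap {p q : V} (h : K.Aligned p q) (a b : ℝ) :
    K.Aligned (lineMap p q a) (lineMap p q b) := by
  rw [aligned_iff] at *
  simp only [AffineMap.lineMap_apply_module', map_add, map_smul, map_sub, add_apply,
    smul_apply, sub_apply, smul_eq_mul, K.bracket_self,
    K.bracket_swap q p]
  linear_combination (b - a) * h

theorem aligned_refl (K : ContactForm V) (p : V) : K.Aligned p p := by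
  simp [aligned_iff, K.bracket_self]

theorem Aligned.symm {p q : V} (h : K.Aligned p q) : K.Aligned q p := by
  simpa using h.lineMap 1 0

theorem Aligned.lineMap_right {p q : V} (h : K.Aligned p q) (a : ℝ) :
    K.Aligned p (AffineMap.lineMap p q a) := by
  simpa using h.lineMap 0 a

theorem Aligned.of_mem_segment {p q a b : V} (h : K.Aligned p q) (ha : a ∈ segment ℝ p q)
    (hb : b ∈ segment ℝ p q) : K.Aligned a b := by
  rw [segment_eq_image_lineMap] at ha hb
  obtain ⟨s, -, rfl⟩ := ha
  obtain ⟨t, -, rfl⟩ := hb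
  exact h.lineMap s t

/-- The horizontal vector at `p` that agrees with `v` modulo `reeb`. -/
def lift (K : ContactForm V) (p : V) : V →L[ℝ] V :=
  .id ℝ V + (K.bracket p - K.height).smulRight K.reeb

theorem lift_apply (p v : V) :
    K.lift p v = v + (K.bracket p v - K.height v) • K.reeb := rfl

theorem horizontal_lift (K : ContactForm V) (p v : V) : K.Horizontal p (K.lift p v) := by
  simp [Horizontal, lift_apply, K.height_reeb, bracket_reeb_right]

theorem lift_eq_self {p v : V} (h : K.Horizontal p v) : K.lift p v = v := by
  rw [lift_apply, h, sub_self, zero_smul, add_zero]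

theorem bracket_lift_left (K : ContactForm V) (p v w : V) :
    K.bracket (K.lift p v) w = K.bracket v w := by
  simp [lift_apply, bracket_reeb_left]

theorem bracket_lift_right (K : ContactForm V) (p v w : V) :
    K.bracket v (K.lift p w) = K.bracket v w := by
  simp [lift_apply, bracket_reeb_right]

theorem continuous_lift_left (K : ContactForm V) (v : V) : Continuous fun p => K.lift p v := by
  simp only [lift_apply]
  fun_prop

/-- The point of the line `m + ℝ e` that is aligned with `r`, where `m` is aligned with `p`
and `e` is horizontal at `p`. When `bracket e (r - p) = 0` this is the junk value `m`. -/
def joint (K : ContactForm V) (p m e r : V) : V :=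
  m + ((K.height (r - m) - K.bracket m r) / K.bracket e (r - p)) • e

theorem aligned_left_joint {p m e : V} (hm : K.Aligned p m) (he : K.Horizontal p e) (r : V) :
    K.Aligned p (K.joint p m e r) := by
  rw [Aligned, joint, add_sub_right_comm]
  exact Horizontal.add hm (he.smul _)

theorem aligned_joint_right {p m e r : V} (he : K.Horizontal p e)
    (hr : K.bracket e (r - p) ≠ 0) : K.Aligned (K.joint p m e r) r := by
  set c := (K.height (r - m) - K.bracket m r) / K.bracket e (r - p) with hc
  have hc' : c * K.bracket e (r - p) = K.height (r - m) - K.bracket m r := div_mul_cancel₀ _ hr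
  rw [Horizontal] at he
  rw [aligned_iff, joint, ← hc]
  simp only [map_sub, map_add, map_smul, add_apply,
    smul_apply, smul_eq_mul, K.bracket_swap e p] at hc' ⊢
  linear_combination -hc' - c * he

theorem joint_eq_left {p m e r : V} (h : K.Aligned m r) : K.joint p m e r = m := by
  rw [aligned_iff, ← map_sub] at h
  simp [joint, h]

theorem continuousAt_joint {p m e r : V} (hr : K.bracket e (r - p) ≠ 0) :
    ContinuousAt (K.joint p m e) r := by
  unfold joint
  fun_prop (disch := exact hr)

end Alignment

section Chain

/- The relay point solves one linear equation, nondegenerate because `Q - P` is not central. -/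
theorem exists_relay {P Q : V} (hPQ : K.Aligned P Q) (hB : K.bracket (Q - P) ≠ 0) (s : ℝ)
    {t : ℝ} (ht : t ≠ 0) :
    ∃ m : V → V, Tendsto m (𝓝 (lineMap P Q t)) (𝓝 (lineMap P Q s)) ∧
      ∀ᶠ r in 𝓝 (lineMap P Q t), K.Aligned P (m r) ∧ K.Aligned (m r) r := by
  obtain ⟨e, he⟩ : ∃ e, K.bracket (Q - P) e ≠ 0 := by
    contrapose! hB
    ext e
    simpa using hB e
  have hden : K.bracket (K.lift P e) (lineMap P Q t - P) ≠ 0 := by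
    rw [← vsub_eq_sub (lineMap P Q t), AffineMap.lineMap_vsub_left, map_smul, bracket_lift_left,
      K.bracket_swap]
    exact smul_ne_zero ht (neg_ne_zero.2 he)
  have hcont : Continuous fun r => K.bracket (K.lift P e) (r - P) := by fun_prop
  refine ⟨K.joint P (lineMap P Q s) (K.lift P e), ?_, ?_⟩
  · simpa only [ContinuousAt, joint_eq_left (hPQ.lineMap s t)] using
      continuousAt_joint (m := lineMap P Q s) hden
  · filter_upwards [hcont.continuousAt.eventually_ne hden] with r hr
    exact ⟨aligned_left_joint (hPQ.lineMap_right s) (K.horizontal_lift P e) r,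
      aligned_joint_right (K.horizontal_lift P e) hr⟩

theorem eventually_mem_segment_of_relay {P Q : V} (hPQ : K.Aligned P Q)
    (hB : K.bracket (Q - P) ≠ 0) {l : ℝ} (l0 : 0 < l) (l1 : l ≤ 1) {M W : Set V}
    (hM : M ∈ 𝓝 (lineMap P Q (l / 2))) (hW : W ∈ 𝓝 Q) :
    ∀ᶠ r in 𝓝 (lineMap P Q l), ∃ m ∈ M, (∃ Q₁ ∈ W, K.Aligned P Q₁ ∧ m ∈ segment ℝ P Q₁) ∧
      ∃ Q₂ ∈ W, K.Aligned m Q₂ ∧ r ∈ segment ℝ m Q₂ := by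
  obtain ⟨m, hm, hal⟩ := exists_relay hPQ hB (l / 2) l0.ne'
  set m₀ : V := lineMap P Q (l / 2)
  set r₀ : V := lineMap P Q l
  have hQ₁ : Tendsto (fun r => lineMap P (m r) (2 / l)) (𝓝 r₀) (𝓝 Q) := by
    have hQ : lineMap P m₀ (2 / l) = Q := by
      rw [AffineMap.lineMap_lineMap_right, show 2 / l * (l / 2) = 1 by field_simp,
        AffineMap.lineMap_apply_one]
    exact hQ ▸ tendsto_const_nhds.lineMap hm tendsto_const_nhds
  have hQ₂ : Tendsto (fun r => lineMap (m r) r ((2 - l) / l)) (𝓝 r₀) (𝓝 Q) := by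
    have hQ : lineMap m₀ r₀ ((2 - l) / l) = Q := by
      have hone : lineMap (l / 2) l ((2 - l) / l) = 1 := by
        simp only [AffineMap.lineMap_apply_ring']; field_simp; ring
      rw [← AffineMap.apply_lineMap, hone, AffineMap.lineMap_apply_one]
    exact hQ ▸ hm.lineMap tendsto_id tendsto_const_nhds
  filter_upwards [hm.eventually hM, hQ₁.eventually hW, hQ₂.eventually hW, hal]
    with r hrM hrQ₁ hrQ₂ ⟨hPm, hmr⟩
  refine ⟨m r, hrM, ⟨_, hrQ₁, hPm.lineMap_right _, mem_segment_lineMap _ _ ?_⟩,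
    _, hrQ₂, hmr.lineMap_right _, mem_segment_lineMap _ _ ?_⟩
  · rw [le_div_iff₀ l0]; linarith
  · rw [le_div_iff₀ l0]; linarith

end Chain

section Convexity

/-- Horizontal convexity: `C` contains the segments joining its aligned points. -/
def HConvex (K : ContactForm V) (C : Set V) : Prop :=
  ∀ ⦃p⦄, p ∈ C → ∀ ⦃q⦄, q ∈ C → K.Aligned p q → segment ℝ p q ⊆ C

/-- `E` and its complement are horizontally convex. -/
def IsMonotone (K : ContactForm V) (E : Set V) : Prop := K.HConvex E ∧ K.HConvex Eᶜ

/-- `Z` contains the whole line through any two of its aligned points. -/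
def LineClosed (K : ContactForm V) (Z : Set V) : Prop :=
  ∀ ⦃p⦄, p ∈ Z → ∀ ⦃q⦄, q ∈ Z → K.Aligned p q → ∀ s : ℝ, lineMap p q s ∈ Z

theorem IsMonotone.compl {E : Set V} (hE : K.IsMonotone E) : K.IsMonotone Eᶜ :=
  ⟨hE.2, (compl_compl E).symm ▸ hE.1⟩

theorem HConvex.preimage {C : Set V} (hC : K.HConvex C) (Φ : V' →ᵃ[ℝ] V)
    (hΦ : ∀ p q, K'.Aligned p q → K.Aligned (Φ p) (Φ q)) : K'.HConvex (Φ ⁻¹' C) := by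
  intro p hp q hq hpq
  rw [← image_subset_iff, image_segment]
  exact hC hp hq (hΦ p q hpq)

theorem IsMonotone.preimage {E : Set V} (hE : K.IsMonotone E) (Φ : V' →ᵃ[ℝ] V)
    (hΦ : ∀ p q, K'.Aligned p q → K.Aligned (Φ p) (Φ q)) : K'.IsMonotone (Φ ⁻¹' E) :=
  ⟨hE.1.preimage Φ hΦ, hE.2.preimage Φ hΦ⟩

theorem LineClosed.preimage {Z : Set V} (hZ : K.LineClosed Z) (Φ : V' →ᵃ[ℝ] V)
    (hΦ : ∀ p q, K'.Aligned p q → K.Aligned (Φ p) (Φ q)) : K'.LineClosed (Φ ⁻¹' Z) := by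
  intro p hp q hq hpq s
  rw [mem_preimage, AffineMap.apply_lineMap]
  exact hZ hp hq (hΦ p q hpq) s

end Convexity

section Surface

/- The segment from `R` to `Q` crosses the zero set of `F`, at a point of `C` beyond `R`. -/
theorem HConvex.mem_of_crossing {C U : Set V} {F : V → ℝ} (hC : K.HConvex C) (hU : Convex ℝ U)
    (hF : Continuous F) (hFC : ∀ p ∈ U, F p = 0 → p ∈ C) {P Q R : V} (hP : P ∈ C)
    (hPQ : K.Aligned P Q) (hR : R ∈ segment ℝ P Q) (hRU : R ∈ U) (hQU : Q ∈ U)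
    (hFR : 0 < F R) (hFQ : F Q < 0) : R ∈ C := by
  obtain ⟨S, hS, hFS⟩ : ∃ S ∈ segment ℝ R Q, F S = 0 :=
    (convex_segment R Q).isPreconnected.intermediate_value (right_mem_segment ℝ R Q)
      (left_mem_segment ℝ R Q) hF.continuousOn ⟨hFQ.le, hFR.le⟩
  have hSC : S ∈ C := hFC S (hU.segment_subset hRU hQU hS) hFS
  rw [mem_segment_iff_wbtw] at hR hS
  refine hC hP hSC (hPQ.of_mem_segment (left_mem_segment ℝ P Q) ?_) ?_
  · exact mem_segment_iff_wbtw.2 (hR.trans_right hS)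
  · exact mem_segment_iff_wbtw.2 (hR.trans_right_left hS)

theorem HConvex.mem_closure_interior_of_crossing {C U : Set V} {F : V → ℝ} (hC : K.HConvex C)
    (hUo : IsOpen U) (hU : Convex ℝ U) (hF : Continuous F) (hFC : ∀ p ∈ U, F p = 0 → p ∈ C)
    {P Q : V} (hP : P ∈ C) (hPQ : K.Aligned P Q) (hB : K.bracket (Q - P) ≠ 0) (hPU : P ∈ U)
    (hQU : Q ∈ U) (hFP : 0 < F P) (hFQ : F Q < 0) : P ∈ closure (interior C) := by
  set A : Set V := U ∩ {p | 0 < F p}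
  set B : Set V := U ∩ {p | F p < 0}
  have hA : IsOpen A := hUo.inter (isOpen_lt continuous_const hF)
  have hB' : IsOpen B := hUo.inter (isOpen_lt hF continuous_const)
  have hline : Tendsto (lineMap P Q : ℝ → V) (𝓝[>] 0) (𝓝 P) :=
    (AffineMap.lineMap_continuous.tendsto' 0 P (by simp)).mono_left nhdsWithin_le_nhds
  have hhalf : Tendsto (fun l : ℝ => lineMap P Q (l / 2)) (𝓝[>] 0) (𝓝 P) :=
    ((AffineMap.lineMap_continuous.comp (continuous_id.div_const (2 : ℝ))).tendsto' 0 P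
      (by simp)).mono_left nhdsWithin_le_nhds
  have hPA : A ∈ 𝓝 P := hA.mem_nhds ⟨hPU, hFP⟩
  refine mem_closure_of_tendsto hline ?_
  filter_upwards [Ioc_mem_nhdsGT one_pos, hline.eventually hPA,
    hhalf.eventually hPA] with l hl hlA hlA'
  rw [mem_interior_iff_mem_nhds]
  filter_upwards [hA.mem_nhds hlA, eventually_mem_segment_of_relay hPQ hB hl.1 hl.2
    (hA.mem_nhds hlA') (hB'.mem_nhds ⟨hQU, hFQ⟩)] with r hr hrelay
  obtain ⟨m, hm, ⟨Q₁, hQ₁, hPQ₁, hmQ₁⟩, Q₂, hQ₂, hmQ₂, hrQ₂⟩ := hrelay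
  have hmC : m ∈ C :=
    hC.mem_of_crossing hU hF hFC hP hPQ₁ hmQ₁ hm.1 hQ₁.1 hm.2 hQ₁.2
  exact hC.mem_of_crossing hU hF hFC hmC hmQ₂ hrQ₂ hr.1 hQ₂.1 hr.2 hQ₂.2

end Surface

section Sign

theorem HConvex.mem_or_mem_of_compl {C : Set V} (hC : K.HConvex Cᶜ) {p a b : V} (hp : p ∈ C)
    (hab : K.Aligned a b) (hpab : p ∈ segment ℝ a b) : a ∈ C ∨ b ∈ C := by
  by_contra! h
  exact hC h.1 h.2 hab hpab hp

theorem Horizontal.aligned_sub_add {p v : V} (h : K.Horizontal p v) :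
    K.Aligned (p - v) (p + v) := by
  have := h.aligned_add.lineMap (-1) 1
  simpa [AffineMap.lineMap_apply_module', ← sub_eq_neg_add, add_comm v] using this

theorem HConvex.exists_sign_of_compl {C : Set V} (hC : K.HConvex Cᶜ) {p v : V} (hp : p ∈ C)
    (hv : K.Horizontal p v) : ∃ ε : ℝ, (ε = 1 ∨ ε = -1) ∧ p + ε • v ∈ C := by
  rcases hC.mem_or_mem_of_compl hp hv.aligned_sub_add (mem_segment_sub_add p v) with h | h
  · exact ⟨-1, .inr rfl, by simpa [← sub_eq_add_neg] using h⟩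
  · exact ⟨1, .inl rfl, by simpa using h⟩

end Sign

section Heisenberg

/-- The Heisenberg group `ℍ`, with coordinates `(x, y, t)`. -/
abbrev Heis := ℝ × ℝ × ℝ

/-- The contact form of `ℍ`, normalised as in the group law `hmul`. -/
def heis : ContactForm Heis where
  height := .comp (.snd ℝ ℝ ℝ) (.snd ℝ ℝ (ℝ × ℝ))
  bracket :=
    let x : Heis →L[ℝ] ℝ := .fst ℝ ℝ (ℝ × ℝ)
    let y : Heis →L[ℝ] ℝ := .comp (.fst ℝ ℝ ℝ) (.snd ℝ ℝ (ℝ × ℝ))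
    (2 : ℝ) • (y.smulRight x - x.smulRight y)
  reeb := (0, 0, 1)
  bracket_self v := by simp [mul_comm]
  height_reeb := rfl
  bracket_reeb := by simp

theorem heis_height (p : Heis) : heis.height p = p.2.2 := rfl

theorem heis_bracket (p q : Heis) : heis.bracket p q = 2 * (p.2.1 * q.1 - p.1 * q.2.1) := rfl

theorem heis_reeb : heis.reeb = (0, 0, 1) := rfl

theorem heis_aligned_iff {p q : Heis} :
    heis.Aligned p q ↔ q.2.2 - p.2.2 = 2 * (p.2.1 * q.1 - p.1 * q.2.1) :=
  aligned_iff

theorem heis_lift (p v : Heis) :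
    heis.lift p v = (v.1, v.2.1, 2 * (p.2.1 * v.1 - p.1 * v.2.1)) := by
  ext <;> simp [lift_apply, heis_height, heis_bracket, heis_reeb]

theorem heis_bracket_ne_zero : heis.bracket ≠ 0 := fun h => by
  have : heis.bracket (0, 1, 0) (1, 0, 0) = 0 := by rw [h]; rfl
  simp [heis_bracket] at this

end Heisenberg

section Frame

/-- The affine map `ℍ → V` that sends the origin to `p`, the first two coordinate axes to the
horizontal directions `v` and `w` at `p`, and the third axis to the direction of `reeb`, scaled so
that aligned points go to aligned points. -/
def frame (K : ContactForm V) (p v w : V) : Heis →ᵃ[ℝ] V :=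
  AffineMap.const ℝ Heis p + LinearMap.toAffineMap
    { toFun P := K.lift p (P.1 • v + P.2.1 • w) + (P.2.2 * (K.bracket w v / 2)) • K.reeb
      map_add' P Q := by simp only [Prod.fst_add, Prod.snd_add, map_add, map_smul]; module
      map_smul' a P := by
        simp only [Prod.smul_fst, Prod.smul_snd, map_add, map_smul, smul_eq_mul,
          RingHom.id_apply]
        module }

theorem frame_apply (p v w : V) (P : Heis) : K.frame p v w P =
    p + (K.lift p (P.1 • v + P.2.1 • w) + (P.2.2 * (K.bracket w v / 2)) • K.reeb) := rfl

theorem aligned_frame (K : ContactForm V) (p v w : V) (P Q : Heis) (h : heis.Aligned P Q) :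
    K.Aligned (K.frame p v w P) (K.frame p v w Q) := by
  rw [heis_aligned_iff] at h
  simp only [aligned_iff, frame_apply, lift_apply, map_add, map_smul, add_apply, smul_apply,
    smul_eq_mul, K.height_reeb, bracket_reeb_left, bracket_reeb_right, K.bracket_self,
    K.bracket_swap v, K.bracket_swap w p]
  linear_combination (K.bracket w v / 2) * h

theorem surjective_frame (p : Heis) {v w : Heis} (h : heis.bracket w v ≠ 0) :
    Function.Surjective (heis.frame p v w) := by
  intro q
  obtain ⟨d, rfl⟩ : ∃ d, q = p + d := ⟨q - p, by abel⟩
  set B := heis.bracket w v with hB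
  refine ⟨(heis.bracket w d / B, heis.bracket d v / B,
    (d.2.2 - heis.bracket p d) * (2 / B)), ?_⟩
  have hx : (heis.bracket w d / B) * v.1 + (heis.bracket d v / B) * w.1 = d.1 := by
    field_simp
    simp only [hB, heis_bracket]
    ring
  have hy : (heis.bracket w d / B) * v.2.1 + (heis.bracket d v / B) * w.2.1 = d.2.1 := by
    field_simp
    simp only [hB, heis_bracket]
    ring
  rw [frame_apply, ← hB, mul_assoc, div_mul_div_cancel₀' two_ne_zero, div_self h, heis_lift,
    heis_reeb, heis_bracket p]
  ext
  · simp [hx]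
  · simp [hy]
  · simp [hx, hy]

theorem continuous_frame (p v w : V) : Continuous (K.frame p v w) :=
  AffineMap.continuous_of_finiteDimensional _

theorem isOpenMap_frame (p : Heis) {v w : Heis} (h : heis.bracket w v ≠ 0) :
    IsOpenMap (heis.frame p v w) := by
  rw [← AffineMap.isOpenMap_linear_iff]
  exact LinearMap.isOpenMap_of_finiteDimensional _
    ((AffineMap.linear_surjective_iff _).2 (surjective_frame p h))

end Frame

section Regularity

/-- Every monotone set of `K` is contained in the closure of its interior. -/
def MonotoneRegular (K : ContactForm V) : Prop :=
  ∀ ⦃E : Set V⦄, K.IsMonotone E → E ⊆ closure (interior E)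

/- The four points span a piece of the ruled surface `2 x = y t`. -/
theorem HConvex.mem_of_two_mul_eq {C : Set Heis} (hC : heis.HConvex C)
    (h₀ : (0, -1, 0) ∈ C) (h₁ : (-1, -1, 2) ∈ C) (h₂ : (0, 1, 0) ∈ C) (h₃ : (1, 1, 2) ∈ C)
    {x y t : ℝ} (hy : y ∈ Icc (-1) 1) (ht : t ∈ Icc 0 2) (h : 2 * x = y * t) :
    (x, y, t) ∈ C := by
  have ht' : t / 2 ∈ Icc (0 : ℝ) 1 := ⟨by linarith [ht.1], by linarith [ht.2]⟩
  have hleft := hC h₀ h₁ (by norm_num [heis_aligned_iff]) (lineMap_mem_segment ℝ _ _ ht')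
  have hright := hC h₂ h₃ (by norm_num [heis_aligned_iff]) (lineMap_mem_segment ℝ _ _ ht')
  have hy' : (1 + y) / 2 ∈ Icc (0 : ℝ) 1 := ⟨by linarith [hy.1], by linarith [hy.2]⟩
  convert hC hleft hright _ (lineMap_mem_segment ℝ _ _ hy') using 1
  · ext <;> simp [AffineMap.lineMap_apply_module'] <;> linarith
  · simp [AffineMap.lineMap_apply_module', heis_aligned_iff]

theorem IsMonotone.mem_closure_interior_of_vertices {C : Set Heis} (hC : heis.IsMonotone C)
    (h₀ : (0, -1, 0) ∈ C) (h₁ : (-1, -1, 2) ∈ C) (h₂ : (0, 1, 0) ∈ C) (h₃ : (1, 1, 2) ∈ C) :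
    (1, 0, 1) ∈ closure (interior C) ∨ (-1, 0, 1) ∈ closure (interior C) := by
  set U : Set Heis := univ ×ˢ Ioo (-1) 1 ×ˢ Ioo 0 2
  have hUo : IsOpen U := isOpen_univ.prod (isOpen_Ioo.prod isOpen_Ioo)
  have hU : Convex ℝ U := convex_univ.prod ((convex_Ioo _ _).prod (convex_Ioo _ _))
  have hmem (x : ℝ) : ((x, 0, 1) : Heis) ∈ U := by norm_num [U]
  set F : Heis → ℝ := fun p => 2 * p.1 - p.2.1 * p.2.2
  have hF : Continuous F := by fun_prop
  have hFC (p : Heis) (hp : p ∈ U) (hFp : F p = 0) : p ∈ C :=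
    hC.1.mem_of_two_mul_eq h₀ h₁ h₂ h₃ (Ioo_subset_Icc_self hp.2.1) (Ioo_subset_Icc_self hp.2.2)
      (sub_eq_zero.1 hFp)
  have hal (a b : ℝ) : heis.Aligned (a, 0, 1) (b, 0, 1) := by simp [heis_aligned_iff]
  have hB {a b : ℝ} (hab : a ≠ b) : heis.bracket ((b, 0, 1) - (a, 0, 1)) ≠ 0 := fun h => by
    have := congr($h (0, 1, 0))
    simp [heis_bracket, sub_eq_zero, hab] at this
  have hcentre : ((0, 0, 1) : Heis) ∈ segment ℝ (1, 0, 1) (-1, 0, 1) := by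
    simpa using mem_segment_sub_add (𝕜 := ℝ) ((0, 0, 1) : Heis) (-1, 0, 0)
  have h := hC.2.mem_or_mem_of_compl (hFC _ (hmem 0) (by norm_num [F])) (hal 1 (-1)) hcentre
  refine h.imp (fun hP => ?_) fun hP => ?_
  · exact hC.1.mem_closure_interior_of_crossing hUo hU hF hFC hP (hal 1 (-1))
      (hB (by norm_num)) (hmem 1) (hmem (-1)) (by norm_num [F]) (by norm_num [F])
  · exact hC.1.mem_closure_interior_of_crossing hUo hU hF.neg
      (fun p hp hFp => hFC p hp (neg_eq_zero.1 hFp)) hP (hal (-1) 1)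
      (hB (by norm_num)) (hmem (-1)) (hmem 1) (by norm_num [F]) (by norm_num [F])

theorem mem_closure_interior_frame {C : Set Heis} {p v w P : Heis} (h : heis.bracket w v ≠ 0)
    (hP : P ∈ closure (interior (heis.frame p v w ⁻¹' C))) :
    heis.frame p v w P ∈ closure (interior C) := by
  refine closure_mono ?_ (image_closure_subset_closure_image (continuous_frame p v w)
    (mem_image_of_mem _ hP))
  exact ((isOpenMap_frame p h).image_interior_subset _).trans
    (interior_mono (image_preimage_subset _ _))

theorem HConvex.mem_of_abs_le_one {C : Set Heis} (hC : heis.HConvex C) (h : 0 ∈ C) {σ : ℝ}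
    (hσ : σ = 1 ∨ σ = -1) (hσC : (2 * σ, 0, 0) ∈ C) {ε : ℝ} (hε : |ε| ≤ 1) :
    (σ + ε, 0, 0) ∈ C := by
  have hs : (1 + ε * σ) / 2 ∈ Icc (0 : ℝ) 1 := by
    rcases hσ with rfl | rfl <;> constructor <;> linarith [abs_le.1 hε]
  have hσ2 : σ * σ = 1 := by rcases hσ with rfl | rfl <;> norm_num
  convert hC h hσC (by simp [heis_aligned_iff]) (lineMap_mem_segment ℝ _ _ hs) using 1
  ext
  · simp [AffineMap.lineMap_apply_module']
    linear_combination -ε * hσ2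
  · simp
  · simp

/- Three horizontal steps from the origin, with signs chosen so as to stay in `C`, trace the
boundary of the ruled surface. -/
theorem IsMonotone.exists_mem_closure_interior {C : Set Heis} (hC : heis.IsMonotone C)
    (h : 0 ∈ C) : ∃ P ∈ Metric.closedBall (0 : Heis) 5, P ∈ closure (interior C) := by
  obtain ⟨σ, hσ, hσC⟩ := hC.2.exists_sign_of_compl h (heis.horizontal_lift 0 (2, 0, 0))
  have hseg (ε : ℝ) (hε : |ε| ≤ 1) : ((σ + ε, 0, 0) : Heis) ∈ C :=
    hC.1.mem_of_abs_le_one h hσ (by simpa [heis_lift, mul_comm] using hσC) hε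
  obtain ⟨β, hβ, hβC⟩ := hC.2.exists_sign_of_compl (hseg 0 (by simp))
    (heis.horizontal_lift _ (0, 2, 0))
  obtain ⟨α, hα, hαC⟩ := hC.2.exists_sign_of_compl hβC (heis.horizontal_lift _ (1, 0, 0))
  set Φ := heis.frame (σ, β, -2 * σ * β) (α, 0, 0) (0, β, 0)
  have hΦ (x y t : ℝ) : Φ (x, y, t) = (σ + α * x, β + β * y,
      -2 * σ * β + 2 * α * β * x - 2 * σ * β * y + α * β * t) := by
    simp only [Φ, frame_apply, heis_lift, heis_bracket, heis_reeb]
    ext <;> simp <;> ring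
  have hαβ : heis.bracket (0, β, 0) (α, 0, 0) ≠ 0 := by
    rcases hα with rfl | rfl <;> rcases hβ with rfl | rfl <;> norm_num [heis_bracket]
  have hball (ε : ℝ) (hε : ε = 1 ∨ ε = -1) : Φ (ε, 0, 1) ∈ Metric.closedBall 0 5 := by
    rw [hΦ, mem_closedBall_zero_iff]
    rcases hσ with rfl | rfl <;> rcases hα with rfl | rfl <;> rcases hβ with rfl | rfl <;>
      rcases hε with rfl | rfl <;> norm_num [Prod.norm_def]
  have hmono := hC.preimage Φ (heis.aligned_frame _ _ _)
  have hvertices := hmono.mem_closure_interior_of_vertices (C := Φ ⁻¹' C) ?_ ?_ ?_ ?_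
  · rcases hvertices with h | h
    · exact ⟨_, hball 1 (.inl rfl), mem_closure_interior_frame hαβ h⟩
    · exact ⟨_, hball (-1) (.inr rfl), mem_closure_interior_frame hαβ h⟩
  · rw [mem_preimage, hΦ]
    convert hseg 0 (by simp) using 3 <;> ring
  · rw [mem_preimage, hΦ]
    convert hseg (-α) (by rcases hα with rfl | rfl <;> simp) using 3 <;> ring
  · rw [mem_preimage, hΦ]
    convert hβC using 1
    ext <;> simp [heis_lift] <;> ring
  · rw [mem_preimage, hΦ]
    convert hαC using 1
    ext <;> simp [heis_lift] <;> ring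

theorem monotoneRegular_heis : heis.MonotoneRegular := by
  intro C hC q hq
  by_contra hqC
  set f : ℝ × Heis → Heis := fun z => heis.frame q (z.1, 0, 0) (0, z.1, 0) z.2 with hf
  have hfc : Continuous f := by
    simp only [hf, frame_apply, heis_lift, heis_bracket, heis_reeb]
    fun_prop
  have hf0 (P : Heis) : f (0, P) = q := by simp [hf, frame_apply, heis_lift, heis_bracket]
  have hnhds : (closure (interior C))ᶜ ∈ 𝓝 q := isClosed_closure.isOpen_compl.mem_nhds hqC
  have hsmall : ∀ᶠ e in 𝓝 (0 : ℝ), ∀ P ∈ Metric.closedBall (0 : Heis) 5,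
      f (e, P) ∉ closure (interior C) :=
    (isCompact_closedBall 0 5).eventually_forall_of_forall_eventually fun P _ =>
      (hfc.tendsto' (0, P) q (hf0 P)).eventually hnhds
  obtain ⟨e, he, he0⟩ := ((hsmall.filter_mono nhdsWithin_le_nhds).and
    (self_mem_nhdsWithin (s := {0}ᶜ))).exists
  have hmono := hC.preimage (heis.frame q (e, 0, 0) (0, e, 0)) (heis.aligned_frame _ _ _)
  obtain ⟨P, hPball, hP⟩ := hmono.exists_mem_closure_interior (by simpa [frame_apply] using hq)
  have he0' : heis.bracket (0, e, 0) (e, 0, 0) ≠ 0 := by simpa [heis_bracket] using he0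
  exact he P hPball (mem_closure_interior_frame he0' hP)

/-- The contact form of the product of the group with a line `ℝ`, which comes first. -/
def cylinder (K : ContactForm V) : ContactForm (ℝ × V) where
  height := .comp K.height (.snd ℝ ℝ V)
  bracket := K.bracket.bilinearComp (.snd ℝ ℝ V) (.snd ℝ ℝ V)
  reeb := (0, K.reeb)
  bracket_self v := K.bracket_self v.2
  height_reeb := K.height_reeb
  bracket_reeb := by ext <;> simp [K.bracket_reeb]

theorem cylinder_aligned_iff {p q : ℝ × V} : K.cylinder.Aligned p q ↔ K.Aligned p.2 q.2 :=
  Iff.rfl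

/-- The inclusion of `V` into `ℝ × V` as the slice over `u`. -/
def slice (u : ℝ) : V →ᵃ[ℝ] ℝ × V := (AffineMap.const ℝ V u).prod (AffineMap.id ℝ V)

theorem slice_apply (u : ℝ) (p : V) : slice u p = (u, p) := rfl

theorem aligned_slice (K : ContactForm V) (u : ℝ) (p q : V) (h : K.Aligned p q) :
    K.cylinder.Aligned (slice u p) (slice u q) := h

theorem aligned_fiber (K : ContactForm V) (p : V) (u u' : ℝ) :
    K.cylinder.Aligned (u, p) (u', p) := K.aligned_refl p

theorem HConvex.ordConnected_fiber {E : Set (ℝ × V)} (hE : K.cylinder.HConvex E) (p : V) :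
    OrdConnected {u | (u, p) ∈ E} := by
  refine ⟨fun a ha b hb c hc => hE ha hb (K.aligned_fiber p a b) ?_⟩
  rw [← Prod.image_mk_segment_left]
  exact mem_image_of_mem _ (segment_eq_Icc (𝕜 := ℝ) (hc.1.trans hc.2) ▸ hc)

theorem IsMonotone.exists_ne_mem_fiber {E : Set (ℝ × V)} (hE : K.cylinder.IsMonotone E)
    {u : ℝ} {p : V} (h : (u, p) ∈ E) {I : Set ℝ} (hI : I ∈ 𝓝 u) :
    ∃ u' ≠ u, u' ∈ I ∧ (u', p) ∈ E := by
  obtain ⟨δ, hδ, hδI⟩ := Metric.nhds_basis_closedBall.mem_iff.1 hI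
  have hsub : u - δ ∈ I := hδI (by simp [abs_of_pos hδ])
  have hadd : u + δ ∈ I := hδI (by simp [abs_of_pos hδ])
  have hmid : (u, p) ∈ segment ℝ (u - δ, p) (u + δ, p) := by
    simpa using mem_segment_sub_add (𝕜 := ℝ) (u, p) (δ, 0)
  rcases hE.2.mem_or_mem_of_compl h (K.aligned_fiber p _ _) hmid with h | h
  · exact ⟨u - δ, by simpa using hδ.ne', hsub, h⟩
  · exact ⟨u + δ, by simpa using hδ.ne', hadd, h⟩

theorem MonotoneRegular.cylinder (hK : K.MonotoneRegular) : K.cylinder.MonotoneRegular := by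
  intro E hE
  rintro ⟨u, p⟩ hp
  set A : ℝ → Set V := fun u => interior (slice u ⁻¹' E)
  have hA {u : ℝ} {r : V} (hr : r ∈ A u) : (u, r) ∈ E :=
    (interior_subset hr : r ∈ slice u ⁻¹' E)
  have hslice (u : ℝ) : slice u ⁻¹' E ⊆ closure (A u) :=
    hK (hE.preimage (slice u) (K.aligned_slice u))
  have hprism (u u' : ℝ) : uIoo u u' ×ˢ (A u ∩ A u') ⊆ interior E := by
    refine interior_maximal ?_ (isOpen_Ioo.prod (isOpen_interior.inter isOpen_interior))
    rintro ⟨x, r⟩ ⟨hx, hr, hr'⟩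
    exact (hE.1.ordConnected_fiber r).uIcc_subset (hA hr) (hA hr')
      (uIoo_subset_uIcc_self hx)
  rw [mem_closure_iff_nhds]
  intro N hN
  obtain ⟨I, hI, O, hO, hprod⟩ := mem_nhds_prod_iff.1 hN
  obtain ⟨δ, hδ, hδI⟩ := Metric.nhds_basis_ball.mem_iff.1 hI
  obtain ⟨p₁, hp₁O, hp₁⟩ := mem_closure_iff_nhds.1 (hslice u hp) _ (interior_mem_nhds.2 hO)
  obtain ⟨u', hu', hu'I, hp₁'⟩ := hE.exists_ne_mem_fiber (hA hp₁)
    (Metric.ball_mem_nhds u hδ)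
  obtain ⟨p₂, ⟨hp₂O, hp₂⟩, hp₂'⟩ := mem_closure_iff.1 (hslice u' hp₁')
    (interior O ∩ A u) (isOpen_interior.inter isOpen_interior) ⟨hp₁O, hp₁⟩
  obtain ⟨x, hx⟩ : (uIoo u u').Nonempty := nonempty_uIoo.2 hu'.symm
  have hxI : x ∈ I := hδI ((convex_ball u δ).ordConnected.uIcc_subset (Metric.mem_ball_self hδ)
    hu'I (uIoo_subset_uIcc_self hx))
  exact ⟨(x, p₂), hprod ⟨hxI, interior_subset hp₂O⟩, hprism u u' ⟨hx, hp₂, hp₂'⟩⟩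

end Regularity

section Boundary

theorem HConvex.segment_subset_closure {C : Set V} (hC : K.HConvex C) {P Q : V}
    (hP : P ∈ closure C) (hQ : Q ∈ interior C) (hPQ : K.Aligned P Q) :
    segment ℝ P Q ⊆ closure C := by
  set q : V → V := fun p => p + K.lift p (Q - P)
  have hq : Continuous q := continuous_id.add (K.continuous_lift_left _)
  have hqP : q P = Q := by rw [show q P = P + K.lift P (Q - P) from rfl, lift_eq_self hPQ,
    add_sub_cancel]
  rw [segment_eq_image_lineMap]
  rintro _ ⟨l, hl, rfl⟩
  have hcl : P ∈ closure (q ⁻¹' interior C ∩ C) :=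
    (isOpen_interior.preimage hq).inter_closure ⟨by rwa [mem_preimage, hqP], hP⟩
  have hline : Continuous fun p => lineMap p (q p) l := by fun_prop
  rw [← hqP]
  refine map_mem_closure (f := fun p => lineMap p (q p) l) hline hcl fun p hp => ?_
  exact hC hp.2 (interior_subset hp.1) (K.horizontal_lift p _).aligned_add
    (lineMap_mem_segment ℝ _ _ hl)

variable {E : Set V}

theorem IsMonotone.interior_closure (hE : K.IsMonotone E) (hK : K.MonotoneRegular) :
    interior (closure E) = interior E := by
  refine subset_antisymm (interior_maximal ?_ isOpen_interior) (interior_mono subset_closure)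
  rw [← compl_subset_compl, ← closure_compl, ← interior_compl]
  exact hK hE.compl

theorem IsMonotone.lineMap_mem_interior_of_bracket_ne_zero (hE : K.IsMonotone E)
    (hK : K.MonotoneRegular) {P Q : V} (hP : P ∈ closure E) (hQ : Q ∈ interior E)
    (hPQ : K.Aligned P Q) (hB : K.bracket (Q - P) ≠ 0) {l : ℝ} (l0 : 0 < l) (l1 : l ≤ 1) :
    lineMap P Q l ∈ interior E := by
  rw [← hE.interior_closure hK, mem_interior_iff_mem_nhds]
  filter_upwards [eventually_mem_segment_of_relay hPQ hB l0 l1 univ_mem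
    (isOpen_interior.mem_nhds hQ)] with r hr
  obtain ⟨m, -, ⟨Q₁, hQ₁, hPQ₁, hm⟩, Q₂, hQ₂, hmQ₂, hr⟩ := hr
  exact hE.1.segment_subset_closure (hE.1.segment_subset_closure hP hQ₁ hPQ₁ hm) hQ₂ hmQ₂ hr

theorem bracket_lineMap_of_eq {P Q : V} (h : K.bracket P = K.bracket Q) (l : ℝ) :
    K.bracket (lineMap P Q l) = K.bracket Q := by
  simp [AffineMap.lineMap_apply_module', h]

theorem Horizontal.of_bracket_eq {p q v : V} (h : K.Horizontal p v)
    (hpq : K.bracket p = K.bracket q) : K.Horizontal q v := by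
  rwa [Horizontal, ← hpq]

theorem exists_horizontal_add_mem_sub_mem (hB : K.bracket ≠ 0) {p : V} {U : Set V}
    (hU : U ∈ 𝓝 p) : ∃ v, K.Horizontal p v ∧ K.bracket v ≠ 0 ∧ p + v ∈ U ∧ p - v ∈ U := by
  obtain ⟨e, he⟩ : ∃ e, K.bracket e ≠ 0 := by
    contrapose! hB
    exact ContinuousLinearMap.ext hB
  have hadd : Tendsto (fun δ : ℝ => p + δ • K.lift p e) (𝓝 0) (𝓝 p) :=
    Continuous.tendsto' (by fun_prop) _ _ (by simp)
  have hsub : Tendsto (fun δ : ℝ => p - δ • K.lift p e) (𝓝 0) (𝓝 p) :=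
    Continuous.tendsto' (by fun_prop) _ _ (by simp)
  have hsmall : ∀ᶠ δ in 𝓝[≠] (0 : ℝ), p + δ • K.lift p e ∈ U ∧ p - δ • K.lift p e ∈ U :=
    ((hadd.eventually hU).and (hsub.eventually hU)).filter_mono nhdsWithin_le_nhds
  obtain ⟨δ, hδU, hδ⟩ := (hsmall.and self_mem_nhdsWithin).exists
  refine ⟨δ • K.lift p e, (K.horizontal_lift p e).smul δ, ?_, hδU⟩
  rw [map_smul, show K.bracket (K.lift p e) = K.bracket e from
    ContinuousLinearMap.ext (K.bracket_lift_left p e)]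
  exact smul_ne_zero hδ he

theorem IsMonotone.lineMap_add_mem_interior (hE : K.IsMonotone E) (hK : K.MonotoneRegular)
    {P Q v : V} (hP : P ∈ closure E) (hPQ : K.Aligned P Q) (hbr : K.bracket P = K.bracket Q)
    (hv : K.Horizontal Q v) (hvB : K.bracket v ≠ 0) (hQv : Q + v ∈ interior E) {l : ℝ}
    (l0 : 0 < l) (l1 : l ≤ 1) : lineMap P Q l + l • v ∈ interior E := by
  have hal : K.Aligned P (Q + v) := by
    rw [Aligned, add_sub_right_comm]
    exact Horizontal.add hPQ (hv.of_bracket_eq hbr.symm)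
  have hB : K.bracket (Q + v - P) ≠ 0 := by simpa [hbr] using hvB
  convert hE.lineMap_mem_interior_of_bracket_ne_zero hK hP hQv hal hB l0 l1 using 1
  simp only [AffineMap.lineMap_apply_module']
  module

theorem IsMonotone.mem_interior_of_sub_of_add (hE : K.IsMonotone E) (hK : K.MonotoneRegular)
    {p v : V} (hv : K.Horizontal p v) (hvB : K.bracket v ≠ 0) (hsub : p - v ∈ interior E)
    (hadd : p + v ∈ interior E) : p ∈ interior E := by
  have hB : K.bracket (p + v - (p - v)) ≠ 0 := by
    rw [add_sub_sub_cancel, ← two_smul ℝ, map_smul]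
    exact smul_ne_zero two_ne_zero hvB
  convert hE.lineMap_mem_interior_of_bracket_ne_zero hK (subset_closure (interior_subset hsub))
    hadd hv.aligned_sub_add hB (l := 1 / 2) (by norm_num) (by norm_num) using 1
  simp only [AffineMap.lineMap_apply_module']
  module

/- When `Q - P` is central, move `Q` off the line in two opposite directions. -/
theorem IsMonotone.lineMap_mem_interior (hE : K.IsMonotone E) (hK : K.MonotoneRegular)
    (hB : K.bracket ≠ 0) {P Q : V} (hP : P ∈ closure E) (hQ : Q ∈ interior E)
    (hPQ : K.Aligned P Q) {l : ℝ} (l0 : 0 < l) (l1 : l ≤ 1) : lineMap P Q l ∈ interior E := by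
  by_cases hcentral : K.bracket (Q - P) = 0
  swap
  · exact hE.lineMap_mem_interior_of_bracket_ne_zero hK hP hQ hPQ hcentral l0 l1
  have hbr : K.bracket P = K.bracket Q := (sub_eq_zero.1 (map_sub K.bracket Q P ▸ hcentral)).symm
  obtain ⟨v, hv, hvB, hadd, hsub⟩ :=
    exists_horizontal_add_mem_sub_mem hB (isOpen_interior.mem_nhds hQ)
  have hv' : K.Horizontal Q (-v) := by simpa using hv.smul (-1)
  refine hE.mem_interior_of_sub_of_add (v := l • v) hK ?_ ?_ ?_ ?_
  · exact (hv.smul l).of_bracket_eq (bracket_lineMap_of_eq hbr l).symm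
  · rw [map_smul]
    exact smul_ne_zero l0.ne' hvB
  · rw [sub_eq_add_neg, ← smul_neg]
    exact hE.lineMap_add_mem_interior hK hP hPQ hbr hv' (by simpa using hvB)
      (by rwa [← sub_eq_add_neg]) l0 l1
  · exact hE.lineMap_add_mem_interior hK hP hPQ hbr hv hvB hadd l0 l1

theorem IsMonotone.notMem_interior_of_one_le (hE : K.IsMonotone E) (hK : K.MonotoneRegular)
    (hB : K.bracket ≠ 0) {P Q : V} (hP : P ∈ closure E) (hQ : Q ∉ interior E)
    (hPQ : K.Aligned P Q) {s : ℝ} (hs : 1 ≤ s) : lineMap P Q s ∉ interior E := by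
  intro h
  have := hE.lineMap_mem_interior hK hB hP h (hPQ.lineMap_right s) (l := s⁻¹) (by positivity)
    (inv_le_one_of_one_le₀ hs)
  rw [AffineMap.lineMap_lineMap_right, inv_mul_cancel₀ (by positivity),
    AffineMap.lineMap_apply_one] at this
  exact hQ this

theorem IsMonotone.lineMap_mem_frontier_of_one_le (hE : K.IsMonotone E)
    (hK : K.MonotoneRegular) (hB : K.bracket ≠ 0) {P Q : V} (hP : P ∈ frontier E)
    (hQ : Q ∈ frontier E) (hPQ : K.Aligned P Q) {s : ℝ} (hs : 1 ≤ s) :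
    lineMap P Q s ∈ frontier E := by
  have hP' : P ∈ closure Eᶜ := frontier_subset_closure (frontier_compl E ▸ hP)
  rw [frontier_eq_inter_compl_interior] at hQ ⊢
  exact ⟨hE.notMem_interior_of_one_le hK hB (frontier_subset_closure hP) hQ.1 hPQ hs,
    hE.compl.notMem_interior_of_one_le hK hB hP' hQ.2 hPQ hs⟩

/- If the point `R` at a parameter `0 < s < 1` were interior to `E` or to `Eᶜ`, so would be `Q`,
which lies between `R` and the frontier point at parameter `2`. -/
theorem IsMonotone.lineClosed_frontier (hE : K.IsMonotone E) (hK : K.MonotoneRegular)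
    (hB : K.bracket ≠ 0) : K.LineClosed (frontier E) := by
  intro P hP Q hQ hPQ s
  rcases le_or_gt 1 s with h1 | h1
  · exact hE.lineMap_mem_frontier_of_one_le hK hB hP hQ hPQ h1
  rcases le_or_gt s 0 with h0 | h0
  · rw [← AffineMap.lineMap_apply_one_sub]
    exact hE.lineMap_mem_frontier_of_one_le hK hB hQ hP hPQ.symm (by linarith)
  have hT := hE.lineMap_mem_frontier_of_one_le hK hB hP hQ hPQ one_le_two
  have hQ' : lineMap (lineMap P Q (2 : ℝ)) (lineMap P Q s) (1 / (2 - s)) = Q := by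
    have hone : lineMap 2 s (1 / (2 - s)) = 1 := by
      have : 2 - s ≠ 0 := by linarith
      simp only [AffineMap.lineMap_apply_ring']
      field_simp
      ring
    rw [← AffineMap.apply_lineMap, hone, AffineMap.lineMap_apply_one]
  have hnot {F : Set V} (hF : K.IsMonotone F) (hTF : lineMap P Q (2 : ℝ) ∈ closure F)
      (hQF : Q ∉ interior F) : lineMap P Q s ∉ interior F := fun hR => by
    refine hQF (hQ' ▸ hF.lineMap_mem_interior hK hB hTF hR (hPQ.lineMap 2 s) ?_ ?_)
    · exact one_div_pos.2 (by linarith)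
    · rw [div_le_one (by linarith)]
      linarith
  rw [frontier_eq_inter_compl_interior] at hQ ⊢
  exact ⟨hnot hE (frontier_subset_closure hT) hQ.1,
    hnot hE.compl (frontier_subset_closure (frontier_compl E ▸ hT)) hQ.2⟩

/- Otherwise the punctured plane spanned by `v` and `w` stays in the interior of `E` or of `Eᶜ`,
and then so does `P`, which lies between `P - v` and `P + v`. -/
theorem IsMonotone.exists_mem_frontier_of_horizontal (hE : K.IsMonotone E)
    (hK : K.MonotoneRegular) (hB : K.bracket ≠ 0) {P v w : V} (hP : P ∈ frontier E)
    (hv : K.Horizontal P v) : ∃ a : ℝ × ℝ, a ≠ 0 ∧ P + (a.1 • v + a.2 • w) ∈ frontier E := by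
  by_contra! h
  set g : ℝ × ℝ → V := fun a => P + (a.1 • v + a.2 • w)
  have hg : Continuous g := by fun_prop
  have hconn : IsPreconnected (g '' {0}ᶜ) :=
    (isConnected_compl_singleton_of_one_lt_rank (by norm_num) 0).isPreconnected.image g
      hg.continuousOn
  have hdisj : Disjoint (g '' {0}ᶜ) (frontier E) := by
    rw [disjoint_left]
    rintro _ ⟨a, ha, rfl⟩
    exact h a ha
  have hsub : P - v ∈ g '' {0}ᶜ := ⟨(-1, 0), by simp, by simp [g, sub_eq_add_neg]⟩
  have hadd : P + v ∈ g '' {0}ᶜ := ⟨(1, 0), by simp, by simp [g]⟩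
  have hmid {F : Set V} (hF : K.IsMonotone F) (hgF : g '' {0}ᶜ ⊆ interior F) :
      P ∈ interior F := by
    convert hF.lineMap_mem_interior hK hB (subset_closure (interior_subset (hgF hsub)))
      (hgF hadd) hv.aligned_sub_add (l := 1 / 2) (by norm_num) (by norm_num) using 1
    simp only [AffineMap.lineMap_apply_module']
    module
  rw [frontier_eq_inter_compl_interior] at hP
  rcases subset_interior_or_subset_interior_compl hconn hdisj with h | h
  · exact hP.1 (hmid hE h)
  · exact hP.2 (hmid hE.compl h)

theorem exists_aligned_bracket_ne_zero (hB : K.bracket ≠ 0) (p q : V) :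
    ∃ r, K.Aligned p r ∧ K.bracket (r - q) ≠ 0 := by
  by_cases h : K.bracket (p - q) = 0
  · obtain ⟨v, hv, hvB, -⟩ := exists_horizontal_add_mem_sub_mem hB (univ_mem (f := 𝓝 p))
    refine ⟨p + v, hv.aligned_add, ?_⟩
    rwa [add_sub_right_comm, map_add, h, zero_add]
  · exact ⟨p, K.aligned_refl p, h⟩

theorem forall_of_aligned {S : V → Prop} (hB : K.bracket ≠ 0)
    (hS : ∀ p q, K.Aligned p q → S p → S q) {p : V} (hp : S p) (q : V) : S q := by
  obtain ⟨r, hpr, hr⟩ := exists_aligned_bracket_ne_zero hB p q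
  obtain ⟨e, he⟩ : ∃ e, K.bracket (r - q) e ≠ 0 := by
    contrapose! hr
    exact ContinuousLinearMap.ext hr
  have hden : K.bracket (K.lift r e) (q - r) ≠ 0 := by
    rw [bracket_lift_left, K.bracket_swap, ← neg_sub r q]
    simpa using he
  have hj := aligned_left_joint (K.aligned_refl r) (K.horizontal_lift r e) q
  exact hS _ _ (aligned_joint_right (K.horizontal_lift r e) hden) (hS _ _ hj (hS _ _ hpr hp))

end Boundary

section HorizontalLine

/-- The horizontal line through `p` in the direction `v`, understood modulo `reeb`. -/
def hline (K : ContactForm V) (p v : V) : Set V := range fun s : ℝ => p + s • K.lift p v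

theorem mem_hline_self (K : ContactForm V) (p v : V) : p ∈ K.hline p v := ⟨0, by simp⟩

theorem lift_add_left (p w v : V) :
    K.lift (p + w) v = K.lift p v + K.bracket w v • K.reeb := by
  simp only [lift_apply, map_add, add_apply]
  module

theorem lift_add_smul_lift (p v : V) (s : ℝ) :
    K.lift (p + s • K.lift p v) v = K.lift p v := by
  rw [lift_add_left, map_smul, smul_apply, bracket_lift_left, K.bracket_self]
  simp

theorem lift_add_smul_reeb (p v : V) (c : ℝ) : K.lift (p + c • K.reeb) v = K.lift p v := by
  simp [lift_add_left, bracket_reeb_left]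

theorem lift_reeb (p : V) : K.lift p K.reeb = 0 := by
  simp [lift_apply, bracket_reeb_right, K.height_reeb]

theorem Horizontal.bracket_eq_zero {p v w : V} (hv : K.Horizontal p v) (hw : K.Horizontal p w)
    (h : K.Aligned (p + v) (p + w)) : K.bracket v w = 0 := by
  rw [Horizontal] at hv hw
  simp only [aligned_iff, map_add, add_apply, K.bracket_self, K.bracket_swap v p] at h
  linear_combination hw - hv - h

theorem hline_eq_of_mem {p q v : V} (h : q ∈ K.hline p v) : K.hline q v = K.hline p v := by
  obtain ⟨s, rfl⟩ := h
  rw [hline, hline, ← (Equiv.addLeft s).surjective.range_comp fun t : ℝ => p + t • K.lift p v]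
  refine congrArg range (funext fun t => ?_)
  simp only [lift_add_smul_lift, Function.comp_apply, Equiv.coe_addLeft]
  module

theorem hline_subset_of_lift_eq_smul {p v w : V} {k : ℝ} (h : K.lift p v = k • K.lift p w) :
    K.hline p v ⊆ K.hline p w := by
  rintro _ ⟨s, rfl⟩
  exact ⟨s * k, by simp only [h, smul_smul]⟩

theorem aligned_of_mem_hline {p v q r : V} (hq : q ∈ K.hline p v) (hr : r ∈ K.hline p v) :
    K.Aligned q r := by
  rw [← hline_eq_of_mem hq] at hr
  obtain ⟨s, rfl⟩ := hr
  exact ((K.horizontal_lift q v).smul s).aligned_add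

theorem LineClosed.hline_subset {Z : Set V} (hZ : K.LineClosed Z) {p v : V} (hp : p ∈ Z)
    (hpv : p + K.lift p v ∈ Z) : K.hline p v ⊆ Z := by
  rintro _ ⟨s, rfl⟩
  simpa [AffineMap.lineMap_apply_module', add_comm] using
    hZ hp hpv (K.horizontal_lift p v).aligned_add s

theorem LineClosed.hline_sub_subset {Z : Set V} (hZ : K.LineClosed Z) {p q : V} (hp : p ∈ Z)
    (hq : q ∈ Z) (hpq : K.Aligned p q) : K.hline p (q - p) ⊆ Z :=
  hZ.hline_subset hp (by rwa [lift_eq_self hpq, add_sub_cancel])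

end HorizontalLine

section LineClosed

variable {Z : Set Heis}

/- The two lines are rulings of the surface `2 x = y t`, whose other family of rulings therefore
lies in `Z`; and through every point off the surface some horizontal line cuts it twice. -/
theorem LineClosed.eq_univ_of_rulings (hZ : heis.LineClosed Z)
    (h₀ : ∀ s : ℝ, (s, -1, -2 * s) ∈ Z) (h₁ : ∀ s : ℝ, (s, 1, 2 * s) ∈ Z) : Z = univ := by
  have hsurface (x y t : ℝ) (h : 2 * x = y * t) : (x, y, t) ∈ Z := by
    convert hZ (h₀ (-t / 2)) (h₁ (t / 2)) (by rw [heis_aligned_iff]; ring) ((1 + y) / 2) using 1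
    ext <;> simp [AffineMap.lineMap_apply_module'] <;> linarith
  have hoff (x y t : ℝ) (hy : y ≠ 0) : (x, y, t) ∈ Z := by
    set f := 2 * x - y * t with hf
    by_cases hf0 : f = 0
    · exact hsurface x y t (sub_eq_zero.1 hf0)
    set a := (f / 2 + x) / y
    have ha : y * a = f / 2 + x := mul_div_cancel₀ _ hy
    obtain ⟨s, s', hss', hs, hs'⟩ := exists_ne_mul_sq_add_mul_eq hf0 (-(2 * a - t - y * f))
    have hcut (s : ℝ) (h : f * s ^ 2 + -(2 * a - t - y * f) * s = f) :
        (x + s * a, y + s, t + s * f) ∈ Z :=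
      hsurface _ _ _ (by linear_combination -h + hf)
    have hal : heis.Aligned (x + s * a, y + s, t + s * f) (x + s' * a, y + s', t + s' * f) := by
      rw [heis_aligned_iff]
      linear_combination -2 * (s' - s) * ha
    convert hZ (hcut s hs) (hcut s' hs') hal (s / (s - s')) using 1
    have : s - s' ≠ 0 := sub_ne_zero.2 hss'
    ext <;> simp [AffineMap.lineMap_apply_module'] <;> field_simp <;> ring
  refine eq_univ_of_forall fun ⟨x, y, t⟩ => ?_
  by_cases hy : y = 0
  · convert hZ (hoff x (-1) (t + 2 * x) (by norm_num)) (hoff x 1 (t - 2 * x) one_ne_zero)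
      (by rw [heis_aligned_iff]; ring) (1 / 2) using 1
    ext <;> simp [AffineMap.lineMap_apply_module', hy] <;> ring
  · exact hoff x y t hy

theorem LineClosed.eq_univ_of_hline_sub_of_hline_add (hZ : heis.LineClosed Z) {p v w : Heis}
    (hw : heis.Horizontal p w) (hwv : heis.bracket w v ≠ 0) (hsub : heis.hline (p - w) v ⊆ Z)
    (hadd : heis.hline (p + w) v ⊆ Z) : Z = univ := by
  have hpre : heis.frame p v w ⁻¹' Z = univ := by
    refine (hZ.preimage _ (heis.aligned_frame p v w)).eq_univ_of_rulings (fun s => ?_) fun s => ?_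
    · rw [mem_preimage]
      convert hsub ⟨s, rfl⟩ using 1
      rw [frame_apply, sub_eq_add_neg p w, lift_add_left]
      simp only [map_add, map_smul, lift_eq_self hw, map_neg, neg_apply]
      module
    · rw [mem_preimage]
      convert hadd ⟨s, rfl⟩ using 1
      rw [frame_apply, lift_add_left]
      simp only [map_add, map_smul, lift_eq_self hw]
      module
  exact eq_univ_of_univ_subset
    ((surjective_frame p hwv).range_eq ▸ preimage_eq_univ_iff.1 hpre)

theorem LineClosed.eq_univ_of_parallel (hZ : heis.LineClosed Z) {p q v : Heis}
    (hp : heis.hline p v ⊆ Z) (hq : heis.hline q v ⊆ Z) (h : heis.bracket v (q - p) ≠ 0) :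
    Z = univ := by
  obtain ⟨o, ⟨s, rfl⟩, hoq⟩ : ∃ o ∈ heis.hline p v, heis.Aligned o q :=
    ⟨heis.joint p p (heis.lift p v) q, ⟨_, rfl⟩,
      aligned_joint_right (heis.horizontal_lift p v) (by rwa [bracket_lift_left])⟩
  set o := p + s • heis.lift p v with ho
  set m : Heis := lineMap o q (1 / 2 : ℝ) with hm
  have hmq : q - m = (1 / 2 : ℝ) • (q - o) := by
    rw [hm, AffineMap.lineMap_apply_module']
    module
  have hB : heis.bracket (q - m) v ≠ 0 := by
    have : heis.bracket v (q - o) = heis.bracket v (q - p) := by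
      simp [ho, bracket_lift_right, heis.bracket_self]
    rw [heis.bracket_swap, hmq, map_smul, this]
    simpa using h
  have hmq' : heis.Aligned m q := by
    have := hoq.lineMap (1 / 2) 1
    rwa [AffineMap.lineMap_apply_one] at this
  refine hZ.eq_univ_of_hline_sub_of_hline_add (p := m) hmq' hB ?_ (by rwa [add_sub_cancel])
  have hmo : m - (q - m) = o := by
    rw [hmq, hm, AffineMap.lineMap_apply_module']
    module
  rwa [hmo, hline_eq_of_mem ⟨s, rfl⟩]

/- With `σ` as below, `p + v` is aligned with the point of the second line at parameter `σ` and
`p - v` with the one at `-σ`, and the joining lines are parallel. -/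
theorem LineClosed.eq_univ_of_skew (hZ : heis.LineClosed Z) {p v w : Heis} {c : ℝ}
    (hp : heis.hline p v ⊆ Z) (hq : heis.hline (p + c • heis.reeb) w ⊆ Z) (hc : c ≠ 0)
    (hvw : heis.bracket v w ≠ 0) : Z = univ := by
  set σ := c / heis.bracket v w
  have hσc : σ * heis.bracket v w = c := div_mul_cancel₀ c hvw
  set v' := heis.lift p v
  set w' := heis.lift p w
  have hv' : heis.height v' = heis.bracket p v' := heis.horizontal_lift p v
  have hw' : heis.height w' = heis.bracket p w' := heis.horizontal_lift p w
  have hvw' : heis.bracket v' w' = heis.bracket v w := by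
    rw [bracket_lift_left, bracket_lift_right]
  have hjoin (ε : ℝ) (hε : ε * ε = 1) :
      heis.hline (p + ε • v') (σ • w' - v') ⊆ Z := by
    have hpε : p + ε • v' ∈ Z := hp ⟨ε, rfl⟩
    have hqε : p + c • heis.reeb + (ε * σ) • w' ∈ Z :=
      hq ⟨ε * σ, by simp only [lift_add_smul_reeb, w']⟩
    have hal : heis.Aligned (p + ε • v') (p + c • heis.reeb + (ε * σ) • w') := by
      simp only [aligned_iff, map_add, map_smul, add_apply, smul_apply, smul_eq_mul,
        heis.bracket_self, bracket_reeb_right, heis.height_reeb, hv', hw', hvw',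
        heis.bracket_swap v' p]
      linear_combination -hσc * (ε * ε) - c * hε
    refine subset_trans (hline_subset_of_lift_eq_smul (k := ε) ?_)
      (hZ.hline_sub_subset hpε hqε hal)
    rw [show p + c • heis.reeb + (ε * σ) • w' - (p + ε • v') =
      ε • (σ • w' - v') + c • heis.reeb by module, map_add, map_smul, map_smul, lift_reeb,
      smul_zero, add_zero, smul_smul, hε, one_smul]
  refine hZ.eq_univ_of_parallel (hjoin 1 (by norm_num)) (hjoin (-1) (by norm_num)) ?_
  rw [show p + (-1 : ℝ) • v' - (p + (1 : ℝ) • v') = (-2 : ℝ) • v' by module]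
  have hB : heis.bracket (σ • w' - v') ((-2 : ℝ) • v') = 2 * c := by
    simp only [map_sub, map_smul, sub_apply, smul_apply, smul_eq_mul, heis.bracket_self,
      heis.bracket_swap w' v', hvw']
    linear_combination 2 * hσc
  exact hB ▸ mul_ne_zero two_ne_zero hc

theorem exists_mem_hline_add_smul_reeb (p q : Heis) {v w : Heis} (h : heis.bracket v w ≠ 0) :
    ∃ o ∈ heis.hline p v, ∃ c : ℝ, o + c • heis.reeb ∈ heis.hline q w := by
  have h' : heis.bracket w v ≠ 0 := by rwa [heis.bracket_swap, neg_ne_zero]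
  obtain ⟨⟨x, y, t⟩, rfl⟩ := surjective_frame p h' q
  refine ⟨p + x • heis.lift p v, ⟨x, rfl⟩,
    t * (heis.bracket w v / 2) - x * y * heis.bracket v w, -y, ?_⟩
  simp only [frame_apply, lift_add_left, map_add, map_smul, add_apply, smul_apply,
    smul_eq_mul, bracket_lift_left, bracket_reeb_left, heis.bracket_self]
  module

theorem LineClosed.hline_inter_hline_nonempty (hZ : heis.LineClosed Z) (hne : Z ≠ univ)
    {p q v w : Heis} (hp : heis.hline p v ⊆ Z) (hq : heis.hline q w ⊆ Z)
    (h : heis.bracket v w ≠ 0) : (heis.hline p v ∩ heis.hline q w).Nonempty := by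
  obtain ⟨o, ho, c, hc⟩ := exists_mem_hline_add_smul_reeb p q h
  by_cases hc0 : c = 0
  · exact ⟨o, ho, by simpa [hc0] using hc⟩
  · rw [← hline_eq_of_mem ho] at hp
    rw [← hline_eq_of_mem hc] at hq
    exact absurd (hZ.eq_univ_of_skew hp hq hc0 h) hne

theorem exists_lift_eq_smul_lift {v w : Heis} (h : heis.bracket v w = 0)
    (hw : heis.bracket w ≠ 0) : ∃ k : ℝ, ∀ q, heis.lift q v = k • heis.lift q w := by
  obtain ⟨z, hz⟩ : ∃ z, heis.bracket w z ≠ 0 := by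
    contrapose! hw
    exact ContinuousLinearMap.ext hw
  refine ⟨heis.bracket v z / heis.bracket w z, fun q => ?_⟩
  have h₁ : v.1 = heis.bracket v z / heis.bracket w z * w.1 := by
    field_simp
    simp only [heis_bracket] at *
    linear_combination -z.1 * h
  have h₂ : v.2.1 = heis.bracket v z / heis.bracket w z * w.2.1 := by
    field_simp
    simp only [heis_bracket] at *
    linear_combination -z.2.1 * h
  simp only [heis_lift, h₁, h₂]
  ext <;> simp
  ring

theorem LineClosed.bracket_sub_eq_zero (hZ : heis.LineClosed Z) (hne : Z ≠ univ)
    {p q v w : Heis} (hp : heis.hline p v ⊆ Z) (hq : heis.hline q w ⊆ Z)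
    (h : heis.bracket v w = 0) (hw : heis.bracket w ≠ 0) : heis.bracket v (q - p) = 0 := by
  obtain ⟨k, hk⟩ := exists_lift_eq_smul_lift h hw
  by_contra hpq
  exact hne (hZ.eq_univ_of_parallel hp ((hline_subset_of_lift_eq_smul (hk q)).trans hq) hpq)

theorem LineClosed.aligned_of_bracket_eq_zero (hZ : heis.LineClosed Z) (hne : Z ≠ univ)
    {o r v w e : Heis} (hv : heis.hline o v ⊆ Z) (hw : heis.hline o w ⊆ Z)
    (hr : heis.hline r e ⊆ Z) (hvw : heis.bracket v w ≠ 0) (he : heis.bracket e ≠ 0)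
    (hve : heis.bracket v e = 0) : heis.Aligned o r := by
  have hwe : heis.bracket w e ≠ 0 := by
    obtain ⟨k, hk⟩ := exists_lift_eq_smul_lift hve he
    rw [← heis.bracket_lift_left 0 v, hk, map_smul, smul_apply, bracket_lift_left,
      heis.bracket_swap] at hvw
    exact neg_ne_zero.1 (right_ne_zero_of_mul hvw)
  obtain ⟨_, ⟨s, rfl⟩, hs⟩ := hZ.hline_inter_hline_nonempty hne hw hr hwe
  have hs0 : heis.bracket v (o + s • heis.lift o w - o) = 0 :=
    hZ.bracket_sub_eq_zero hne hv (hline_eq_of_mem hs ▸ hr) hve he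
  rw [add_sub_cancel_left, map_smul, bracket_lift_right] at hs0
  obtain rfl : s = 0 := (mul_eq_zero.1 hs0).resolve_right hvw
  exact aligned_of_mem_hline (by simpa using hs) (heis.mem_hline_self r e)

theorem LineClosed.aligned_of_hline_subset (hZ : heis.LineClosed Z) (hne : Z ≠ univ)
    {o r v w e : Heis} (hv : heis.hline o v ⊆ Z) (hw : heis.hline o w ⊆ Z)
    (hr : heis.hline r e ⊆ Z) (hvw : heis.bracket v w ≠ 0) (he : heis.bracket e ≠ 0) :
    heis.Aligned o r := by
  by_cases hve : heis.bracket v e = 0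
  · exact hZ.aligned_of_bracket_eq_zero hne hv hw hr hvw he hve
  by_cases hwe : heis.bracket w e = 0
  · rw [heis.bracket_swap, neg_ne_zero] at hvw
    exact hZ.aligned_of_bracket_eq_zero hne hw hv hr hvw he hwe
  obtain ⟨_, ⟨s, rfl⟩, hs⟩ := hZ.hline_inter_hline_nonempty hne hv hr hve
  obtain ⟨_, ⟨t, rfl⟩, ht⟩ := hZ.hline_inter_hline_nonempty hne hw hr hwe
  have hst := ((heis.horizontal_lift o v).smul s).bracket_eq_zero
    ((heis.horizontal_lift o w).smul t) (aligned_of_mem_hline hs ht)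
  have hst' : s = 0 ∨ t = 0 := by
    simpa [bracket_lift_left, bracket_lift_right, hvw, or_comm] using hst
  rcases hst' with rfl | rfl
  · exact aligned_of_mem_hline (by simpa using hs) (heis.mem_hline_self r e)
  · exact aligned_of_mem_hline (by simpa using ht) (heis.mem_hline_self r e)

/- If all the lines are parallel then `Z` lies in a vertical plane; otherwise two of them meet in
a point, and `Z` lies in the horizontal plane of that point. -/
theorem LineClosed.exists_subset_hyperplane (hZ : heis.LineClosed Z) (hne : Z ≠ univ)
    (hZne : Z.Nonempty)
    (hline : ∀ q ∈ Z, ∃ v, heis.bracket v ≠ 0 ∧ heis.hline q v ⊆ Z) :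
    ∃ f : Heis →L[ℝ] ℝ, f ≠ 0 ∧ ∃ c : ℝ, Z ⊆ {p | f p = c} := by
  obtain ⟨p, hp⟩ := hZne
  obtain ⟨v, hv, hpv⟩ := hline p hp
  by_cases hpar : ∀ q ∈ Z, ∀ w, heis.hline q w ⊆ Z → heis.bracket v w = 0
  · refine ⟨heis.bracket v, hv, heis.bracket v p, fun q hq => ?_⟩
    obtain ⟨w, hw, hqw⟩ := hline q hq
    have := hZ.bracket_sub_eq_zero hne hpv hqw (hpar q hq w hqw) hw
    rwa [map_sub, sub_eq_zero] at this
  · push Not at hpar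
    obtain ⟨q, -, w, hqw, hvw⟩ := hpar
    obtain ⟨o, hop, hoq⟩ := hZ.hline_inter_hline_nonempty hne hpv hqw hvw
    refine ⟨heis.height - heis.bracket o, fun h => ?_, heis.height o, fun r hr => ?_⟩
    · have := congr($h heis.reeb)
      simp [heis.height_reeb, bracket_reeb_right] at this
    · obtain ⟨e, he, hre⟩ := hline r hr
      have hor := hZ.aligned_of_hline_subset hne (hline_eq_of_mem hop ▸ hpv)
        (hline_eq_of_mem hoq ▸ hqw) hre hvw he
      rw [aligned_iff] at hor
      simp only [mem_ofPred_eq, sub_apply]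
      linear_combination hor

theorem exists_eq_add_of_lineMap {g : Heis → ℝ} (hg : ∀ ⦃p q⦄, heis.Aligned p q → ∀ s : ℝ,
    g (lineMap p q s) = lineMap (g p) (g q) s) :
    ∃ f : Heis →L[ℝ] ℝ, ∃ c : ℝ, ∀ p, g p = f p + c := by
  set c := g 0 with hc
  set α := g (1, 0, 0) - c with hα
  set β := g (0, 1, 0) - c with hβ
  set γ := (g (1, 1, 2) - α - β - c) / 2 with hγ
  set f : Heis →L[ℝ] ℝ := .coprod (.toSpanSingleton ℝ α)
    (.coprod (.toSpanSingleton ℝ β) (.toSpanSingleton ℝ γ))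
  have hfp (x y t : ℝ) : f (x, y, t) = x * α + (y * β + t * γ) := rfl
  have hZ : heis.LineClosed {p | g p = f p + c} := by
    intro p hp q hq hpq s
    simp only [mem_ofPred_eq] at *
    rw [hg hpq s, hp, hq]
    simp only [AffineMap.lineMap_apply_module', map_add, map_smul, map_sub, smul_eq_mul]
    ring
  have huniv := hZ.eq_univ_of_parallel (p := 0) (q := (0, 1, 0)) (v := (1, 0, 0))
    (hZ.hline_subset ?_ ?_) (hZ.hline_subset ?_ ?_) (by simp [heis_bracket])
  · exact ⟨f, c, eq_univ_iff_forall.1 huniv⟩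
  all_goals simp [heis_lift, hfp, ← hc, hα, hβ, hγ]
  ring

end LineClosed

section CylinderBoundary

variable {E : Set (ℝ × V)}

theorem cylinder_bracket_ne_zero (hB : K.bracket ≠ 0) : K.cylinder.bracket ≠ 0 := by
  contrapose! hB
  ext v w
  exact congr($hB (0, v) (0, w))

theorem LineClosed.mem_of_mem_fiber {W : Set (ℝ × V)} (hW : K.cylinder.LineClosed W)
    {u v : ℝ} {p : V} (hu : (u, p) ∈ W) (hv : (v, p) ∈ W) (huv : u ≠ v) (x : ℝ) :
    (x, p) ∈ W := by
  have hvu : v - u ≠ 0 := sub_ne_zero.2 huv.symm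
  convert hW hu hv (K.aligned_fiber p u v) ((x - u) / (v - u)) using 1
  ext <;> simp [AffineMap.lineMap_apply_module', div_mul_cancel₀ _ hvu]

/- The frontier contains a line through `(u, p)` over the line `p q`; as `(u, p)` is the only point
over `p`, that line is not vertical. -/
theorem IsMonotone.exists_mem_frontier_over_lineMap (hE : K.cylinder.IsMonotone E)
    (hK : K.cylinder.MonotoneRegular) (hB : K.bracket ≠ 0) {p q : V} (hpq : K.Aligned p q)
    (hp : ∃! u, (u, p) ∈ frontier E) (s : ℝ) : ∃ v, (v, lineMap p q s) ∈ frontier E := by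
  obtain ⟨u, hu, hu_unique⟩ := hp
  have hB' := cylinder_bracket_ne_zero hB
  have hvert : K.cylinder.Horizontal (u, p) (1, 0) := by simp [Horizontal, cylinder]
  obtain ⟨⟨a, b⟩, hab, hR⟩ :=
    hE.exists_mem_frontier_of_horizontal hK hB' (w := (0, q - p)) hu hvert
  replace hR : (u + a, p + b • (q - p)) ∈ frontier E := by simpa using hR
  have hb : b ≠ 0 := by
    rintro rfl
    have ha : a = 0 := by simpa using hu_unique (u + a) (by simpa using hR)
    exact hab (by simp [ha])
  have hal : K.cylinder.Aligned (u, p) (u + a, p + b • (q - p)) :=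
    cylinder_aligned_iff.2 (Horizontal.smul hpq b).aligned_add
  refine ⟨u + s / b * a, ?_⟩
  convert hE.lineClosed_frontier hK hB' hu hR hal (s / b) using 1
  ext <;> simp [AffineMap.lineMap_apply_module', smul_smul, div_mul_cancel₀ _ hb, add_comm]

/- Reflection in a point over the midpoint of `p q` carries the fibre over `q` into the fibre
over `p`. -/
theorem IsMonotone.existsUnique_fiber_of_aligned (hE : K.cylinder.IsMonotone E)
    (hK : K.cylinder.MonotoneRegular) (hB : K.bracket ≠ 0) {p q : V} (hpq : K.Aligned p q)
    (hp : ∃! u, (u, p) ∈ frontier E) : ∃! u, (u, q) ∈ frontier E := by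
  obtain ⟨v, hv⟩ := hE.exists_mem_frontier_over_lineMap hK hB hpq hp 1
  obtain ⟨w, hw⟩ := hE.exists_mem_frontier_over_lineMap hK hB hpq hp (1 / 2)
  obtain ⟨u, -, hu_unique⟩ := hp
  have hal := hpq.lineMap 1 (1 / 2)
  rw [AffineMap.lineMap_apply_one] at hv hal
  have hreflect {v : ℝ} (hv : (v, q) ∈ frontier E) : 2 * w - v = u := by
    refine hu_unique _ ?_
    convert hE.lineClosed_frontier hK (cylinder_bracket_ne_zero hB) hv hw hal 2 using 1
    ext
    · simp only [AffineMap.lineMap_apply_module', Prod.fst_add, Prod.smul_fst, Prod.fst_sub,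
        smul_eq_mul]
      ring
    · simp only [AffineMap.lineMap_apply_module', Prod.snd_add, Prod.smul_snd, Prod.snd_sub]
      module
  exact ⟨v, hv, fun v' hv' => by linarith [hreflect hv, hreflect hv']⟩

theorem IsMonotone.exists_frontier_eq_graph (hE : K.cylinder.IsMonotone E)
    (hK : K.cylinder.MonotoneRegular) (hB : K.bracket ≠ 0) {p : V}
    (hp : ∃! u, (u, p) ∈ frontier E) :
    ∃ g : V → ℝ, frontier E = {P | P.1 = g P.2} ∧ ∀ ⦃p q⦄, K.Aligned p q →
      ∀ s : ℝ, g (lineMap p q s) = lineMap (g p) (g q) s := by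
  choose g hg hg_unique using
    forall_of_aligned hB (fun _ _ hpq => hE.existsUnique_fiber_of_aligned hK hB hpq) hp
  refine ⟨g, ?_, fun p q hpq s => ?_⟩
  · ext ⟨u, p⟩
    exact ⟨hg_unique p u, fun h => (show u = g p from h) ▸ hg p⟩
  · have hline := hE.lineClosed_frontier hK (cylinder_bracket_ne_zero hB) (hg p) (hg q)
      (cylinder_aligned_iff.2 hpq) s
    exact (hg_unique _ _ (by simpa [AffineMap.lineMap_apply_module'] using hline)).symm

theorem IsMonotone.exists_hline_subset_frontier {E : Set (ℝ × Heis)}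
    (hE : heis.cylinder.IsMonotone E) {u : ℝ} {q : Heis} (hq : (u, q) ∈ frontier E) :
    ∃ v, heis.bracket v ≠ 0 ∧ heis.hline q v ⊆ slice u ⁻¹' frontier E := by
  have hK := monotoneRegular_heis.cylinder
  have hB := cylinder_bracket_ne_zero heis_bracket_ne_zero
  have hZ : heis.LineClosed (slice u ⁻¹' frontier E) :=
    (hE.lineClosed_frontier hK hB).preimage (slice u) (heis.aligned_slice u)
  obtain ⟨⟨a, b⟩, hab, hR⟩ := hE.exists_mem_frontier_of_horizontal hK hB
    (v := (0, heis.lift q (1, 0, 0))) (w := (0, heis.lift q (0, 1, 0))) hq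
    (heis.horizontal_lift q _)
  refine ⟨(a, b, 0), fun h => hab ?_, hZ.hline_subset hq ?_⟩
  · have hx := congr($h (0, 1, 0))
    have hy := congr($h (1, 0, 0))
    simp only [heis_bracket] at hx hy
    simpa using And.intro hx hy
  · rw [mem_preimage, slice_apply]
    convert hR using 1
    ext <;> simp [heis_lift]
    ring

theorem IsMonotone.exists_frontier_eq_of_invariant {E : Set (ℝ × Heis)}
    (hE : heis.cylinder.IsMonotone E) (hne : E.Nonempty) (hne' : Eᶜ.Nonempty)
    (hinv : ∀ u v p, (u, p) ∈ frontier E → (v, p) ∈ frontier E) :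
    ∃ f : ℝ × Heis →L[ℝ] ℝ, f ≠ 0 ∧ ∃ c : ℝ, frontier E = {P | f P = c} := by
  have hK := monotoneRegular_heis.cylinder
  have hEint : (interior E).Nonempty := closure_nonempty_iff.1 (hne.mono (hK hE))
  have hEint' : (interior Eᶜ).Nonempty := closure_nonempty_iff.1 (hne'.mono (hK hE.compl))
  have hZ : heis.LineClosed (slice 0 ⁻¹' frontier E) :=
    (hE.lineClosed_frontier hK (cylinder_bracket_ne_zero heis_bracket_ne_zero)).preimage
      (slice 0) (heis.aligned_slice 0)
  have hZuniv : slice 0 ⁻¹' frontier E ≠ (univ : Set Heis) := by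
    obtain ⟨⟨u, p⟩, hp⟩ := hEint
    exact fun h => (hinv 0 u p (h ▸ mem_univ p : p ∈ slice 0 ⁻¹' frontier E)).2 hp
  have hZne : (slice 0 ⁻¹' frontier E : Set Heis).Nonempty := by
    obtain ⟨⟨u, p⟩, hp⟩ := nonempty_frontier_iff.2 ⟨hne, nonempty_compl.1 hne'⟩
    exact ⟨p, hinv u 0 p hp⟩
  obtain ⟨f, hf, c, hfc⟩ := hZ.exists_subset_hyperplane hZuniv hZne fun q hq =>
    hE.exists_hline_subset_frontier hq
  have hf' : f.comp (.snd ℝ ℝ Heis) ≠ 0 := fun h => hf (ContinuousLinearMap.ext fun p =>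
    congr($h (0, p)))
  exact ⟨_, hf', c, frontier_eq_of_subset_hyperplane hf' (fun P hP => hfc (hinv _ 0 _ hP))
    hEint hEint'⟩

/- Either the frontier is a union of vertical lines, or some fibre of it is a point. -/
theorem IsMonotone.exists_frontier_eq_hyperplane {E : Set (ℝ × Heis)}
    (hE : heis.cylinder.IsMonotone E) (hne : E.Nonempty) (hne' : Eᶜ.Nonempty) :
    ∃ f : ℝ × Heis →L[ℝ] ℝ, f ≠ 0 ∧ ∃ c : ℝ, frontier E = {P | f P = c} := by
  by_cases hinv : ∀ u v p, (u, p) ∈ frontier E → (v, p) ∈ frontier E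
  · exact hE.exists_frontier_eq_of_invariant hne hne' hinv
  push Not at hinv
  obtain ⟨u, v, p, hu, hv⟩ := hinv
  have hK := monotoneRegular_heis.cylinder
  have hW := hE.lineClosed_frontier hK (cylinder_bracket_ne_zero heis_bracket_ne_zero)
  have hp : ∃! u, (u, p) ∈ frontier E := ⟨u, hu, fun w hw => by
    by_contra hwu
    exact hv (hW.mem_of_mem_fiber hw hu hwu v)⟩
  obtain ⟨g, hfrontier, hg⟩ := hE.exists_frontier_eq_graph hK heis_bracket_ne_zero hp
  obtain ⟨f, c, hf⟩ := exists_eq_add_of_lineMap hg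
  refine ⟨.fst ℝ ℝ Heis - f.comp (.snd ℝ ℝ Heis), fun h => ?_, c, ?_⟩
  · simpa using congr($h (1, 0))
  · rw [hfrontier]
    ext P
    simp [hf, sub_eq_iff_eq_add, add_comm]

end CylinderBoundary

section Coordinates

/-- The coordinates `(x, y, u, t)` on `ℍ×ℝ`. The factor `ℝ`, with coordinate `u`, comes first
in `ℝ × Heis` but third in `Fin 4 → ℝ`. -/
def coords : (ℝ × Heis) ≃L[ℝ] (Fin 4 → ℝ) :=
  LinearEquiv.toContinuousLinearEquiv
    { toFun P := ![P.2.1, P.2.2.1, P.1, P.2.2.2]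
      invFun v := (v 2, v 0, v 1, v 3)
      map_add' P Q := by ext i; fin_cases i <;> rfl
      map_smul' a P := by ext i; fin_cases i <;> rfl
      left_inv P := rfl
      right_inv v := by ext i; fin_cases i <;> rfl }

theorem coords_apply (P : ℝ × Heis) : coords P = ![P.2.1, P.2.2.1, P.1, P.2.2.2] := rfl

theorem coords_add_smul_sub {P Q : ℝ × Heis} (h : heis.cylinder.Aligned P Q) (s : ℝ) :
    coords (P + s • (Q - P)) =
      hmul (coords P) ![s * (Q.2.1 - P.2.1), s * (Q.2.2.1 - P.2.2.1), s * (Q.1 - P.1), 0] := by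
  rw [cylinder_aligned_iff, heis_aligned_iff] at h
  ext i
  fin_cases i <;> simp [coords_apply, hmul]
  linear_combination s * h

theorem hConvex_preimage_coords {C : Set (Fin 4 → ℝ)} (hC : HRConvex C) :
    heis.cylinder.HConvex (coords ⁻¹' C) := by
  intro P hP Q hQ hPQ
  rw [segment_eq_image']
  rintro _ ⟨s, ⟨hs0, hs1⟩, rfl⟩
  have hQ' := coords_add_smul_sub hPQ 1
  simp only [one_smul, one_mul, add_sub_cancel] at hQ'
  rw [mem_preimage, coords_add_smul_sub hPQ]
  exact hC _ hP _ _ _ (hQ' ▸ hQ) s hs0 hs1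

theorem isMonotone_preimage_coords {E : Set (Fin 4 → ℝ)} (hE : PreciselyMonotone E) :
    heis.cylinder.IsMonotone (coords ⁻¹' E) :=
  ⟨hConvex_preimage_coords hE.1, hConvex_preimage_coords hE.2⟩

end Coordinates

end ContactForm

/-- **Monotone sets in `ℍ×ℝ`:** the boundary of a nontrivial precisely monotone set
is an affine hyperplane. -/
theorem monotone_boundary_is_hyperplane
    (E : Set (Fin 4 → ℝ)) (hE : PreciselyMonotone E)
    (h1 : E ≠ ∅) (h2 : E ≠ Set.univ) :
    ∃ ν : Fin 4 → ℝ, ν ≠ 0 ∧ ∃ c : ℝ,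
      frontier E = {v : Fin 4 → ℝ | ∑ i, v i * ν i = c} := by
  have hne := (nonempty_iff_ne_empty.2 h1).preimage ContactForm.coords.surjective
  have hne' := (nonempty_compl.2 h2).preimage ContactForm.coords.surjective
  obtain ⟨f, hf, c, hfc⟩ :=
    (ContactForm.isMonotone_preimage_coords hE).exists_frontier_eq_hyperplane hne hne'
  obtain ⟨ν, hν⟩ := (dotProductEquiv ℝ (Fin 4)).surjective
    (f.toLinearMap ∘ₗ ContactForm.coords.symm.toLinearMap)
  have hνf (v : Fin 4 → ℝ) : ∑ i, v i * ν i = f (ContactForm.coords.symm v) :=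
    (dotProduct_comm v ν).trans congr($hν v)
  refine ⟨ν, ?_, c, ?_⟩
  · rintro rfl
    exact hf (ContinuousLinearMap.ext fun P => by
      simpa using (hνf (ContactForm.coords P)).symm)
  · rw [← ContactForm.coords.isOpenMap.preimage_frontier_eq_frontier_preimage
      ContactForm.coords.continuous] at hfc
    simp only [hνf]
    rw [← ContactForm.coords.symm_preimage_preimage (frontier E), hfc]
    rfl
end
end

section
/- Assume the Hörmander condition. Then there exists p ∈ ℕ such that for every ξ ∈ Z there is c₀ > 0 with the following property: for every r with 0 < r ≤ c₀, the image under Γ of the Euclidean open ball in Z^p centered at (ξ,ξ,…,ξ) of radius r contains the Euclidean open ball in Z × T centered at Γ(ξ,…,ξ) of radius c₀ r². In particular Γ is open at every point (ξ,…,ξ) ∈ Z^p. -/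
/- `Z = ℝ^m`, `T = ℝ^ℓ`, `Q : Z × Z → T` bilinear skew-symmetric, and
`Γ(u₁,…,u_p) = (Σ_j u_j, Σ_{j<k} Q(u_j,u_k))`. -/

noncomputable section

abbrev ZS (m : ℕ) := EuclideanSpace ℝ (Fin m)

abbrev TS (l : ℕ) := EuclideanSpace ℝ (Fin l)

/-- The multiexponential map `Γ : Z^p → Z × T`. -/
def Gam {m l : ℕ} (Q : ZS m →ₗ[ℝ] ZS m →ₗ[ℝ] TS l) (p : ℕ)
    (u : Fin p → ZS m) : ZS m × TS l :=
  (∑ j, u j,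
   ∑ jk ∈ Finset.univ.filter (fun jk : Fin p × Fin p => jk.1 < jk.2),
      Q (u jk.1) (u jk.2))

/-!
For a perturbation `d` of the diagonal point `(ξ, …, ξ)` with `∑ j, d j = 0`, the `T`-component of
`Γ` is `∑_{j<k} Q (d j) (d k) + 2 Q ξ (∑ j, j • d j)`. The term that is linear in `d` vanishes when
the first moment of `d` does, and both conditions hold for combinations of the second differences
`(1, -2, 1, 0)` and `(0, 1, -2, 1)`. With coefficients `x` and `y` these four entries move the
`T`-component by exactly `2 Q x y`, whatever `ξ` is. Concatenating one such block for each member of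
a basis of `T` consisting of values of `Q`, and scaling each by square roots of coordinates, one
reaches every `b : T` at cost `∑ j, ‖d j‖ ^ 2 ≲ ‖b‖`. The `Z`-component is then adjusted by moving
the base point `ξ`, to which the blocks are insensitive.
-/

theorem const_add_append {Z : Type*} [Add Z] {p q : ℕ} (ξ : Z) (u : Fin p → Z) (v : Fin q → Z) :
    (fun j => ξ + Fin.append u v j) = Fin.append (fun j => ξ + u j) (fun j => ξ + v j) := by
  ext j
  cases j using Fin.addCases <;> simp

section Algebra

variable {R Z T : Type*} [CommRing R] [AddCommGroup Z] [Module R Z] [AddCommGroup T] [Module R T]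
  {Q : Z →ₗ[R] Z →ₗ[R] T} {p q N : ℕ}

/-- The multiexponential map `Γ : Z^p → Z × T` of a bilinear map between arbitrary modules; on
Euclidean spaces it is `Gam` by definition. -/
def multiExp (Q : Z →ₗ[R] Z →ₗ[R] T) (u : Fin p → Z) : Z × T :=
  (∑ j, u j, ∑ jk : Fin p × Fin p with jk.1 < jk.2, Q (u jk.1) (u jk.2))

theorem multiExp_snd (u : Fin p → Z) :
    (multiExp Q u).2 = ∑ j, ∑ k, if j < k then Q (u j) (u k) else 0 := by
  rw [multiExp, Finset.sum_filter, Fintype.sum_prod_type]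

theorem multiExp_append (u : Fin p → Z) (v : Fin q → Z) :
    multiExp Q (Fin.append u v) =
      ((multiExp Q u).1 + (multiExp Q v).1,
        (multiExp Q u).2 + (multiExp Q v).2 + Q (multiExp Q u).1 (multiExp Q v).1) := by
  refine Prod.ext ?_ ?_
  · simp [multiExp, Fin.sum_univ_add]
  · have left_lt_left (j k : Fin p) : Fin.castAdd q j < Fin.castAdd q k ↔ j < k := Iff.rfl
    have left_lt_right (j : Fin p) (k : Fin q) : Fin.castAdd q j < Fin.natAdd p k :=
      j.isLt.trans_le (Nat.le_add_right p k)
    have not_right_lt_left (j : Fin p) (k : Fin q) : ¬ Fin.natAdd p k < Fin.castAdd q j :=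
      (left_lt_right j k).asymm
    have cross_terms : Q (multiExp Q u).1 (multiExp Q v).1 = ∑ j, ∑ k, Q (u j) (v k) := by
      simp only [multiExp, map_sum, LinearMap.sum_apply]
      exact Finset.sum_comm
    simp only [multiExp_snd, cross_terms, Fin.sum_univ_add, Fin.append_left, Fin.append_right,
      left_lt_left, left_lt_right, not_right_lt_left, Fin.natAdd_lt_natAdd_iff, if_true, if_false,
      Finset.sum_const_zero, Finset.sum_add_distrib]
    abel

theorem multiExp_const (hQ : Q.IsAlt) (p : ℕ) (ξ : Z) :
    multiExp Q (fun _ : Fin p => ξ) = ((p : R) • ξ, 0) := by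
  simp [multiExp, hQ.self_eq_zero, Nat.cast_smul_eq_nsmul]

/-- The combination `x • (1, -2, 1, 0) + y • (0, 1, -2, 1)` of second differences: its sum and its
first moment vanish. -/
def secondDifferenceBlock (R : Type*) {Z : Type*} [CommRing R] [AddCommGroup Z] [Module R Z]
    (x y : Z) : Fin 4 → Z :=
  ![x, y - (2 : R) • x, x - (2 : R) • y, y]

theorem multiExp_const_add_secondDifferenceBlock (hQ : Q.IsAlt) (ξ x y : Z) :
    multiExp Q (fun j => ξ + secondDifferenceBlock R x y j) =
      ((4 : R) • ξ, (2 : R) • Q x y) := by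
  refine Prod.ext ?_ ?_
  · simp only [multiExp, secondDifferenceBlock, Fin.sum_univ_four, Matrix.cons_val]
    module
  · have pairs (u : Fin 4 → Z) : (multiExp Q u).2 =
        Q (u 0) (u 1 + u 2 + u 3) + Q (u 1) (u 2 + u 3) + Q (u 2) (u 3) := by
      simp [multiExp_snd, Fin.sum_univ_four]
    simp only [pairs, secondDifferenceBlock, Matrix.cons_val, map_add, map_sub, map_smul,
      LinearMap.add_apply, LinearMap.sub_apply, LinearMap.smul_apply, hQ.self_eq_zero,
      ← hQ.neg x y, ← hQ.neg ξ x, ← hQ.neg ξ y]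
    module

/-- The concatenation of the second-difference blocks of the pairs `(x i, y i)`, preceded by a
single zero entry so that the family is nonempty also for `N = 0`. -/
def secondDifferenceBlocks (R : Type*) {Z : Type*} [CommRing R] [AddCommGroup Z] [Module R Z] :
    {N : ℕ} → (x y : Fin N → Z) → Fin (1 + 4 * N) → Z
  | 0, _, _ => 0
  | N + 1, x, y => Fin.append (m := 1 + 4 * N) (secondDifferenceBlocks R (Fin.init x) (Fin.init y))
      (secondDifferenceBlock R (x (Fin.last N)) (y (Fin.last N)))

theorem multiExp_const_add_secondDifferenceBlocks (hQ : Q.IsAlt) (ξ : Z) (x y : Fin N → Z) :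
    multiExp Q (fun j => ξ + secondDifferenceBlocks R x y j) =
      (((1 + 4 * N : ℕ) : R) • ξ, (2 : R) • ∑ i, Q (x i) (y i)) := by
  induction N with
  | zero => simpa [secondDifferenceBlocks] using multiExp_const hQ 1 ξ
  | succ N ih =>
    let d := secondDifferenceBlocks R (Fin.init x) (Fin.init y)
    let e := secondDifferenceBlock R (x (Fin.last N)) (y (Fin.last N))
    calc multiExp Q (fun j => ξ + secondDifferenceBlocks R x y j)
        = multiExp Q (Fin.append (fun j => ξ + d j) (fun j => ξ + e j)) :=
          congrArg (multiExp Q) (const_add_append ξ d e)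
      _ = (((1 + 4 * (N + 1) : ℕ) : R) • ξ, (2 : R) • ∑ i, Q (x i) (y i)) := by
          rw [multiExp_append, ih, multiExp_const_add_secondDifferenceBlock hQ,
            Fin.sum_univ_castSucc]
          refine Prod.ext ?_ ?_
          · push_cast
            module
          · simp [hQ.self_eq_zero, Fin.init]

theorem isAlt_of_forall_eq_neg [IsDomain R] [CharZero R] [Module.IsTorsionFree R T]
    (hskew : ∀ z w : Z, Q z w = -Q w z) : Q.IsAlt := by
  have : IsAddTorsionFree T := .of_isTorsionFree R T
  exact fun z => self_eq_neg.mp (hskew z z)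

end Algebra

theorem exists_basis_eq_apply_of_span_range_eq_top {K Z T : Type*} [Field K] [AddCommGroup Z]
    [Module K Z] [AddCommGroup T] [Module K T] [FiniteDimensional K T] {Q : Z →ₗ[K] Z →ₗ[K] T}
    (hspan : Submodule.span K (Set.range fun z : Z × Z => Q z.1 z.2) = ⊤) :
    ∃ (N : ℕ) (B : Module.Basis (Fin N) K T) (z w : Fin N → Z), ∀ i, B i = Q (z i) (w i) := by
  let B₀ := Module.Basis.ofSpan hspan.ge
  have := Module.Finite.finite_basis B₀
  obtain ⟨N, ⟨e⟩⟩ := Finite.exists_equiv_fin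
    ((linearIndepOn_empty K id).extend (Set.empty_subset (Set.range fun z : Z × Z => Q z.1 z.2)))
  have mem_range (i : Fin N) : B₀.reindex e i ∈ Set.range fun z : Z × Z => Q z.1 z.2 :=
    Module.Basis.ofSpan_subset hspan.ge (by simp [B₀])
  choose z hz using mem_range
  exact ⟨N, B₀.reindex e, fun i => (z i).1, fun i => (z i).2, fun i => (hz i).symm⟩

theorem exists_mul_eq_and_sq_eq_abs (β : ℝ) : ∃ s t : ℝ, s * t = β ∧ s ^ 2 = |β| ∧ t ^ 2 = |β| := by
  have sq_sqrt_abs : √|β| ^ 2 = |β| := Real.sq_sqrt (abs_nonneg β)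
  rcases abs_choice β with h | h
  · exact ⟨√|β|, √|β|, by rw [← sq, sq_sqrt_abs, h], sq_sqrt_abs, sq_sqrt_abs⟩
  · exact ⟨√|β|, -√|β|, by rw [mul_neg, ← sq, sq_sqrt_abs, h, neg_neg], sq_sqrt_abs,
      by rw [neg_sq, sq_sqrt_abs]⟩

theorem sum_norm_const_add_sq_le {ι Z : Type*} [Fintype ι] [SeminormedAddGroup Z]
    (e : Z) (d : ι → Z) :
    ∑ j, ‖e + d j‖ ^ 2 ≤ 2 * (Fintype.card ι * ‖e‖ ^ 2 + ∑ j, ‖d j‖ ^ 2) :=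
  calc ∑ j, ‖e + d j‖ ^ 2 ≤ ∑ j, 2 * (‖e‖ ^ 2 + ‖d j‖ ^ 2) := by
        gcongr with j
        exact (pow_le_pow_left₀ (norm_nonneg _) (norm_add_le e (d j)) 2).trans add_sq_le
    _ = 2 * (Fintype.card ι * ‖e‖ ^ 2 + ∑ j, ‖d j‖ ^ 2) := by
        simp [← Finset.mul_sum, Finset.sum_add_distrib]

section Norm

variable {Z T : Type*} [SeminormedAddCommGroup Z] [NormedSpace ℝ Z] {N : ℕ}

theorem norm_sub_two_smul_sq_le (x y : Z) :
    ‖x - (2 : ℝ) • y‖ ^ 2 ≤ 5 * (‖x‖ ^ 2 + ‖y‖ ^ 2) := by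
  have triangle : ‖x - (2 : ℝ) • y‖ ≤ ‖x‖ + 2 * ‖y‖ := by
    simpa [norm_smul] using norm_sub_le x ((2 : ℝ) • y)
  calc ‖x - (2 : ℝ) • y‖ ^ 2 ≤ (‖x‖ + 2 * ‖y‖) ^ 2 := by gcongr
    _ ≤ 5 * (‖x‖ ^ 2 + ‖y‖ ^ 2) := by linarith [sq_nonneg (2 * ‖x‖ - ‖y‖)]

theorem sum_norm_secondDifferenceBlock_sq_le (x y : Z) :
    ∑ j, ‖secondDifferenceBlock ℝ x y j‖ ^ 2 ≤ 11 * (‖x‖ ^ 2 + ‖y‖ ^ 2) := by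
  simp only [secondDifferenceBlock, Fin.sum_univ_four, Matrix.cons_val]
  linarith [norm_sub_two_smul_sq_le y x, norm_sub_two_smul_sq_le x y]

theorem sum_norm_secondDifferenceBlocks_sq_le (x y : Fin N → Z) :
    ∑ j, ‖secondDifferenceBlocks ℝ x y j‖ ^ 2 ≤ 11 * ∑ i, (‖x i‖ ^ 2 + ‖y i‖ ^ 2) := by
  induction N with
  | zero => simp [secondDifferenceBlocks]
  | succ N ih =>
    refine (Fin.sum_univ_add (a := 1 + 4 * N) (b := 4)
      (fun j => ‖secondDifferenceBlocks ℝ x y j‖ ^ 2)).trans_le ?_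
    rw [Fin.sum_univ_castSucc (n := N), mul_add]
    refine add_le_add ?_ ?_
    · simpa [secondDifferenceBlocks, Fin.init] using ih (Fin.init x) (Fin.init y)
    · simpa [secondDifferenceBlocks] using
        sum_norm_secondDifferenceBlock_sq_le (x (Fin.last N)) (y (Fin.last N))

theorem exists_apply_eq_smul_apply [AddCommGroup T] [Module ℝ T] (Q : Z →ₗ[ℝ] Z →ₗ[ℝ] T)
    (β : ℝ) (z w : Z) :
    ∃ x y : Z, Q x y = β • Q z w ∧ ‖x‖ ^ 2 + ‖y‖ ^ 2 = |β| * (‖z‖ ^ 2 + ‖w‖ ^ 2) := by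
  obtain ⟨s, t, hst, hs, ht⟩ := exists_mul_eq_and_sq_eq_abs β
  refine ⟨s • z, t • w, ?_, ?_⟩
  · rw [map_smul, map_smul, LinearMap.smul_apply, smul_smul, mul_comm, hst]
  · simp only [norm_smul, mul_pow, Real.norm_eq_abs, sq_abs, hs, ht, mul_add]

variable [NormedAddCommGroup T] [NormedSpace ℝ T] [FiniteDimensional ℝ T]
  {Q : Z →ₗ[ℝ] Z →ₗ[ℝ] T}

theorem exists_sum_apply_eq_of_span_range_eq_top
    (hspan : Submodule.span ℝ (Set.range fun z : Z × Z => Q z.1 z.2) = ⊤) :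
    ∃ (N : ℕ) (K : ℝ), 0 ≤ K ∧ ∀ b : T, ∃ x y : Fin N → Z,
      ∑ i, Q (x i) (y i) = b ∧ ∑ i, (‖x i‖ ^ 2 + ‖y i‖ ^ 2) ≤ K * ‖b‖ := by
  obtain ⟨N, B, z, w, hB⟩ := exists_basis_eq_apply_of_span_range_eq_top hspan
  let C (i : Fin N) : ℝ := ‖(B.coord i).toContinuousLinearMap‖
  have abs_repr_le (b : T) (i : Fin N) : |B.repr b i| ≤ C i * ‖b‖ :=
    (B.coord i).toContinuousLinearMap.le_opNorm b
  refine ⟨N, ∑ i, C i * (‖z i‖ ^ 2 + ‖w i‖ ^ 2), by positivity, fun b => ?_⟩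
  choose x y hxy hnorm using fun i => exists_apply_eq_smul_apply Q (B.repr b i) (z i) (w i)
  refine ⟨x, y, ?_, ?_⟩
  · simp only [hxy, ← hB, B.sum_repr]
  · rw [Finset.sum_mul]
    refine Finset.sum_le_sum fun i _ => ?_
    calc ‖x i‖ ^ 2 + ‖y i‖ ^ 2 = |B.repr b i| * (‖z i‖ ^ 2 + ‖w i‖ ^ 2) := hnorm i
      _ ≤ C i * ‖b‖ * (‖z i‖ ^ 2 + ‖w i‖ ^ 2) := by gcongr; exact abs_repr_le b i
      _ = C i * (‖z i‖ ^ 2 + ‖w i‖ ^ 2) * ‖b‖ := by ring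

theorem exists_multiExp_eq_multiExp_const_add (hQ : Q.IsAlt)
    (hspan : Submodule.span ℝ (Set.range fun z : Z × Z => Q z.1 z.2) = ⊤) :
    ∃ (p : ℕ) (K : ℝ), 1 ≤ K ∧ ∀ (ξ a : Z) (b : T), ∃ u : Fin p → Z,
      multiExp Q u = multiExp Q (fun _ : Fin p => ξ) + (a, b) ∧
      ∑ j, ‖u j - ξ‖ ^ 2 ≤ K * (‖a‖ ^ 2 + ‖b‖) := by
  obtain ⟨N, K, hK, hrepr⟩ := exists_sum_apply_eq_of_span_range_eq_top hspan
  let p : ℕ := 1 + 4 * N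
  have hp : (1 : ℝ) ≤ p := by simp [p]
  refine ⟨p, 2 + 11 * K, by linarith, fun ξ a b => ?_⟩
  obtain ⟨x, y, hxy, hnorm⟩ := hrepr ((2⁻¹ : ℝ) • b)
  let d : Fin p → Z := secondDifferenceBlocks ℝ x y
  let e : Z := (p : ℝ)⁻¹ • a
  refine ⟨fun j => (ξ + e) + d j, ?_, ?_⟩
  · rw [multiExp_const_add_secondDifferenceBlocks hQ, multiExp_const hQ, hxy]
    refine Prod.ext ?_ ?_
    · simp [e, p, smul_smul, mul_inv_cancel₀ (by positivity : (1 + 4 * N : ℝ) ≠ 0)]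
    · simp
  · have sum_e : p * ‖e‖ ^ 2 ≤ ‖a‖ ^ 2 :=
      calc p * ‖e‖ ^ 2 = (p : ℝ)⁻¹ * ‖a‖ ^ 2 := by
            simp only [e, norm_smul, norm_inv, RCLike.norm_natCast]
            field
        _ ≤ ‖a‖ ^ 2 := mul_le_of_le_one_left (sq_nonneg _) (inv_le_one_of_one_le₀ hp)
    have sum_d : ∑ j, ‖d j‖ ^ 2 ≤ 11 * K * ‖b‖ / 2 :=
      calc ∑ j, ‖d j‖ ^ 2 ≤ 11 * ∑ i, (‖x i‖ ^ 2 + ‖y i‖ ^ 2) :=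
            sum_norm_secondDifferenceBlocks_sq_le x y
        _ ≤ 11 * (K * ‖(2⁻¹ : ℝ) • b‖) := by gcongr
        _ = 11 * K * ‖b‖ / 2 := by
            simp only [norm_smul, norm_inv, Real.norm_ofNat]
            ring
    calc ∑ j, ‖ξ + e + d j - ξ‖ ^ 2 = ∑ j, ‖e + d j‖ ^ 2 := by
          simp only [add_assoc, add_sub_cancel_left]
      _ ≤ 2 * (p * ‖e‖ ^ 2 + ∑ j, ‖d j‖ ^ 2) := by
          simpa using sum_norm_const_add_sq_le e d
      _ ≤ (2 + 11 * K) * (‖a‖ ^ 2 + ‖b‖) := by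
          linarith [mul_nonneg hK (sq_nonneg ‖a‖), norm_nonneg b]

theorem Gamma_open_at_diagonal_general (hQ : Q.IsAlt)
    (hspan : Submodule.span ℝ (Set.range fun z : Z × Z => Q z.1 z.2) = ⊤) :
    ∃ p : ℕ, ∃ c₀ > (0 : ℝ), ∀ (ξ : Z) (r : ℝ), 0 < r → r ≤ c₀ → ∀ v : Z × T,
      √(‖v.1 - (multiExp Q fun _ : Fin p => ξ).1‖ ^ 2 +
        ‖v.2 - (multiExp Q fun _ : Fin p => ξ).2‖ ^ 2) < c₀ * r ^ 2 →
      ∃ u : Fin p → Z, √(∑ j, ‖u j - ξ‖ ^ 2) < r ∧ multiExp Q u = v := by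
  obtain ⟨p, K, hK, hreach⟩ := exists_multiExp_eq_multiExp_const_add hQ hspan
  refine ⟨p, (2 * K)⁻¹, by positivity, fun ξ r hr hrc v hv => ?_⟩
  set a := v.1 - (multiExp Q fun _ : Fin p => ξ).1
  set b := v.2 - (multiExp Q fun _ : Fin p => ξ).2
  have ha : ‖a‖ < (2 * K)⁻¹ * r ^ 2 :=
    (Real.le_sqrt_of_sq_le (le_add_of_nonneg_right (sq_nonneg ‖b‖))).trans_lt hv
  have hb : ‖b‖ < (2 * K)⁻¹ * r ^ 2 :=
    (Real.le_sqrt_of_sq_le (le_add_of_nonneg_left (sq_nonneg ‖a‖))).trans_lt hv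
  have hc : (2 * K)⁻¹ ≤ 1 := inv_le_one_of_one_le₀ (by linarith)
  have ha_one : ‖a‖ ≤ 1 :=
    ha.le.trans (mul_le_one₀ hc (sq_nonneg r) (pow_le_one₀ hr.le (hrc.trans hc)))
  obtain ⟨u, hu, hnorm⟩ := hreach ξ a b
  refine ⟨u, ?_, hu.trans (Prod.ext (add_sub_cancel _ _) (add_sub_cancel _ _))⟩
  rw [Real.sqrt_lt' hr]
  calc ∑ j, ‖u j - ξ‖ ^ 2 ≤ K * (‖a‖ ^ 2 + ‖b‖) := hnorm
    _ ≤ K * (‖a‖ + ‖b‖) := by gcongr; exact pow_le_of_le_one (norm_nonneg a) ha_one two_ne_zero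
    _ < K * ((2 * K)⁻¹ * r ^ 2 + (2 * K)⁻¹ * r ^ 2) := by gcongr
    _ = r ^ 2 := by field

end Norm

/-- **Quadratic openness of the multiexponential map at diagonal points.** -/
theorem Gamma_open_at_diagonal
    (m l : ℕ) (hm : 0 < m) (hl : 0 < l)
    (Q : ZS m →ₗ[ℝ] ZS m →ₗ[ℝ] TS l)
    (hskew : ∀ z ζ : ZS m, Q z ζ = - Q ζ z)
    (hHorm : Submodule.span ℝ (Set.range fun zz : ZS m × ZS m => Q zz.1 zz.2) = ⊤) :
    ∃ p : ℕ, ∀ ξ : ZS m, ∃ c₀ > (0 : ℝ), ∀ r : ℝ, 0 < r → r ≤ c₀ →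
      ∀ v : ZS m × TS l,
        Real.sqrt (‖v.1 - (Gam Q p fun _ => ξ).1‖ ^ 2 +
                   ‖v.2 - (Gam Q p fun _ => ξ).2‖ ^ 2) < c₀ * r ^ 2 →
        ∃ u : Fin p → ZS m,
          Real.sqrt (∑ j, ‖u j - ξ‖ ^ 2) < r ∧ Gam Q p u = v := by
  obtain ⟨p, c₀, hc₀, hopen⟩ :=
    Gamma_open_at_diagonal_general (isAlt_of_forall_eq_neg hskew) hHorm
  exact ⟨p, fun ξ => ⟨c₀, hc₀, hopen ξ⟩⟩
end
end
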